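/- arXiv:1408.2559 — 2 statements merged into one kernel-verified Lean document; each statement's English description precedes it below -/
import Mathlib

section
/- For every fixed integer t ≥ 1: (i) the proportion of t-intersecting families 𝓕 ⊆ S_n that are trivial tends to 1 as n → ∞; and (ii) the total number of t-intersecting families in S_n, divided by binom(n,t)²·t!·2^{(n−t)!}, tends to 1 as n → ∞. -/
/-- The number of indices on which two permutations of `Fin n` agree. -/
def agreements {n : ℕ} (σ π : Equiv.Perm (Fin n)) : ℕ :=
  (Finset.univ.filter (fun i => σ i = π i)).card

/-- A family of permutations is `t`-intersecting if any two of its members agree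
on at least `t` indices. -/
def IsTIntersecting {n : ℕ} (t : ℕ) (F : Finset (Equiv.Perm (Fin n))) : Prop :=
  ∀ σ ∈ F, ∀ π ∈ F, t ≤ agreements σ π

/-- A family of permutations is trivial if there is a `t`-set of indices `I` and
prescribed values `x i` such that every member sends each `i ∈ I` to `x i`. -/
def IsTrivial {n : ℕ} (t : ℕ) (F : Finset (Equiv.Perm (Fin n))) : Prop :=
  ∃ I : Finset (Fin n), I.card = t ∧ ∃ x : Fin n → Fin n,
    ∀ σ ∈ F, ∀ i ∈ I, σ i = x i


namespace TI
open Finset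

/-- The graph of a permutation. -/
def gr {n : ℕ} (σ : Equiv.Perm (Fin n)) : Finset (Fin n × Fin n) :=
  univ.filter (fun e => σ e.1 = e.2)

/-- All permutations whose graph contains `S`. -/
def star {n : ℕ} (S : Finset (Fin n × Fin n)) : Finset (Equiv.Perm (Fin n)) :=
  univ.filter (fun σ => S ⊆ gr σ)

theorem mem_gr {n : ℕ} {σ : Equiv.Perm (Fin n)} {e : Fin n × Fin n} :
    e ∈ gr σ ↔ σ e.1 = e.2 := by simp [gr]

theorem mem_star {n : ℕ} {S : Finset (Fin n × Fin n)} {σ : Equiv.Perm (Fin n)} :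
    σ ∈ star S ↔ S ⊆ gr σ := by simp [star]

theorem card_gr_inter {n : ℕ} (σ π : Equiv.Perm (Fin n)) :
    (gr σ ∩ gr π).card = agreements σ π := by
  unfold agreements
  symm
  apply Finset.card_bij (fun i _ => (i, σ i))
  · intro i hi
    simp only [mem_filter, mem_univ, true_and] at hi
    simp [mem_gr, hi]
  · intro i _ j _ h
    simpa using congrArg Prod.fst h
  · rintro ⟨a, b⟩ h
    simp only [mem_inter, mem_gr] at h
    exact ⟨a, by simp [h.1, h.2], by simp [h.1]⟩

theorem card_gr {n : ℕ} (σ : Equiv.Perm (Fin n)) : (gr σ).card = n := by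
  have := card_gr_inter σ σ
  simpa [agreements] using this

theorem card_fst {n : ℕ} {S : Finset (Fin n × Fin n)} {σ : Equiv.Perm (Fin n)}
    (h : S ⊆ gr σ) : (S.image Prod.fst).card = S.card := by
  apply Finset.card_image_of_injOn
  rintro ⟨a, b⟩ ha ⟨c, d⟩ hc hh
  have h1 := mem_gr.1 (h ha)
  have h2 := mem_gr.1 (h hc)
  simp only at h1 h2 hh
  subst hh
  rw [← h1, ← h2]

theorem mem_star_iff {n : ℕ} {S : Finset (Fin n × Fin n)} {σ π : Equiv.Perm (Fin n)}
    (h : S ⊆ gr σ) : π ∈ star S ↔ ∀ i ∈ S.image Prod.fst, π i = σ i := by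
  rw [mem_star]
  constructor
  · intro hp i hi
    obtain ⟨e, he, rfl⟩ := Finset.mem_image.1 hi
    rw [mem_gr.1 (hp he), mem_gr.1 (h he)]
  · intro hp e he
    rw [mem_gr, hp _ (Finset.mem_image_of_mem _ he), mem_gr.1 (h he)]

theorem card_star {n : ℕ} {S : Finset (Fin n × Fin n)} {σ : Equiv.Perm (Fin n)}
    (h : S ⊆ gr σ) : (star S).card = (n - S.card).factorial := by
  classical
  set I := S.image Prod.fst with hI
  have e := (Equiv.Perm.subtypeEquivSubtypePerm (fun a : Fin n => a ∉ I))
  have h1 := Fintype.card_congr e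
  rw [Fintype.card_perm, Fintype.card_subtype_compl, Fintype.card_fin, Fintype.card_coe,
    card_fst h] at h1
  rw [h1, Fintype.card_subtype]
  apply Finset.card_bij (fun π _ => σ⁻¹ * π)
  · intro π hp
    rw [mem_star_iff h] at hp
    simp only [not_not, mem_filter, mem_univ, true_and]
    intro a ha
    simp [hp a ha]
  · intro a _ b _ hab
    simpa using hab
  · intro b hb
    refine ⟨σ * b, ?_, by simp⟩
    rw [mem_star_iff h]
    simp only [not_not, mem_filter, mem_univ, true_and] at hb
    intro i hi
    simp [hb i hi]

theorem card_star_le {n : ℕ} (S : Finset (Fin n × Fin n)) :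
    (star S).card ≤ (n - S.card).factorial := by
  by_cases h : (star S).Nonempty
  · obtain ⟨σ, hσ⟩ := h
    exact (card_star (mem_star.1 hσ)).le
  · rw [Finset.not_nonempty_iff_eq_empty.1 h]; simp

theorem numDerangements_ge (m : ℕ) : (m + 2).factorial ≤ 3 * numDerangements (m + 2) ∧
    (m + 3).factorial ≤ 3 * numDerangements (m + 3) := by
  induction m with
  | zero => decide
  | succ k ih =>
    refine ⟨ih.2, ?_⟩
    have e : k + 1 + 3 = (k + 2) + 2 := by ring
    rw [e, numDerangements_add_two, Nat.factorial_succ, Nat.factorial_succ]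
    have h1 := ih.1
    have h2 := ih.2
    rw [Nat.factorial_succ] at h2
    calc (k + 2 + 1 + 1) * ((k + 2 + 1) * (k + 2).factorial)
        = (k + 2 + 1) * ((k + 2).factorial + (k + 2 + 1) * (k + 2).factorial) := by ring
      _ ≤ (k + 2 + 1) * (3 * numDerangements (k + 2) + 3 * numDerangements (k + 3)) := by
          gcongr
      _ = _ := by ring_nf

theorem card_avoid {n : ℕ} {S : Finset (Fin n × Fin n)} {σ₀ : Equiv.Perm (Fin n)}
    (h : S ⊆ gr σ₀) (σ : Equiv.Perm (Fin n)) (hn : S.card + 2 ≤ n) :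
    (n - S.card).factorial ≤ 3 * ((star S).filter (fun π => gr π ∩ gr σ ⊆ S)).card := by
  classical
  set I := S.image Prod.fst with hI
  have hIc : I.card = S.card := card_fst h
  let α := {a : Fin n // a ∉ I}
  have hα : Fintype.card α = n - S.card := by
    simp only [α]
    rw [Fintype.card_subtype_compl, Fintype.card_fin, Fintype.card_coe, hIc]
  obtain ⟨ρ, hρ⟩ : ∃ ρ : Equiv.Perm α, ∀ i : α, ∀ hi : σ₀⁻¹ (σ i) ∉ I, ρ i = ⟨_, hi⟩ := by
    let f : α → α := fun i => if hi : σ₀⁻¹ (σ i) ∉ I then ⟨_, hi⟩ else i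
    let s : Finset α := univ.filter (fun i : α => σ₀⁻¹ (σ i) ∉ I)
    obtain ⟨g, hg⟩ := Finset.exists_equiv_extend_of_card_eq (α := α) (β := α) (t := univ) (by simp)
      (s := s) (f := f) (by simp) (by
        intro i hi j hj hij
        simp only [s, coe_filter, mem_univ, true_and, Set.mem_ofPred_eq] at hi hj
        simp only [f, dif_pos hi, dif_pos hj] at hij
        have h2 := congrArg Subtype.val hij
        exact Subtype.ext (σ.injective (σ₀⁻¹.injective h2)))
    refine ⟨g.trans (Equiv.subtypeUnivEquiv (by simp)), ?_⟩
    intro i hi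
    have h2 := hg i (by simpa [s] using hi)
    simp only [f, dif_pos hi] at h2
    simpa using h2
  have hd : numDerangements (n - S.card) ≤
      ((star S).filter (fun π => gr π ∩ gr σ ⊆ S)).card := by
    rw [← hα, ← card_derangements_eq_numDerangements, ← Fintype.card_coe]
    refine Fintype.card_le_of_injective
      (fun τ => ⟨σ₀ * Equiv.Perm.ofSubtype (ρ * τ.1), ?_⟩) ?_
    · rw [Finset.mem_filter, mem_star_iff h]
      have hout : ∀ i ∈ I, (σ₀ * Equiv.Perm.ofSubtype (ρ * τ.1)) i = σ₀ i := by
        intro i hi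
        rw [Equiv.Perm.mul_apply, Equiv.Perm.ofSubtype_apply_of_not_mem _ (by simpa using hi)]
      refine ⟨hout, ?_⟩
      rintro ⟨a, b⟩ he
      rw [Finset.mem_inter, mem_gr, mem_gr] at he
      simp only at he
      obtain ⟨h1, h2⟩ := he
      by_cases ha : a ∈ I
      · rw [hout a ha] at h1
        obtain ⟨⟨c, d⟩, hcd, hc⟩ := Finset.mem_image.1 ha
        simp only at hc
        subst hc
        have := mem_gr.1 (h hcd)
        simp only at this
        rw [← h1, this]
        exact hcd
      · exfalso
        rw [Equiv.Perm.mul_apply, Equiv.Perm.ofSubtype_apply_of_mem (p := fun a => a ∉ I) (ρ * τ.1) ha] at h1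
        have h3 : ((ρ * τ.1) ⟨a, ha⟩ : Fin n) = σ₀⁻¹ (σ a) := by
          rw [h2, ← h1]; simp
        have h4 : σ₀⁻¹ (σ a) ∉ I := by rw [← h3]; exact ((ρ * τ.1) ⟨a, ha⟩).2
        have h5 := hρ ⟨a, ha⟩ h4
        have h6 : (ρ * τ.1) ⟨a, ha⟩ = ρ ⟨a, ha⟩ := by
          rw [h5]; exact Subtype.ext h3
        have h7 : τ.1 ⟨a, ha⟩ = ⟨a, ha⟩ := ρ.injective h6
        exact τ.2 _ h7
    · intro τ τ' hh
      simp only [Subtype.mk.injEq, mul_right_inj] at hh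
      have := Equiv.Perm.ofSubtype_injective hh
      exact Subtype.ext (mul_left_cancel this)
  obtain ⟨m, hm⟩ : ∃ m, n - S.card = m + 2 := ⟨n - S.card - 2, by omega⟩
  calc (n - S.card).factorial ≤ 3 * numDerangements (n - S.card) := by
        rw [hm]; exact (numDerangements_ge m).1
    _ ≤ _ := by gcongr

end TI

namespace TI
open Finset

theorem setpair {α ι : Type*} [Fintype α] [DecidableEq α] (s : Finset ι) (A B : ι → Finset α)
    (n : ℕ) (hA : ∀ i ∈ s, (A i).card ≤ n) (hB : ∀ i ∈ s, (B i).card ≤ n)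
    (hd : ∀ i ∈ s, Disjoint (A i) (B i))
    (hx : ∀ i ∈ s, ∀ j ∈ s, i ≠ j → ¬ Disjoint (B i) (A j)) : s.card ≤ 4 ^ n := by
  classical
  let U : ι → Finset (Finset α) := fun i => Finset.Icc (B i) (A i)ᶜ
  have hU : (s : Set ι).PairwiseDisjoint U := by
    intro i hi j hj hij
    rw [Function.onFun, Finset.disjoint_left]
    intro W h1 h2
    simp only [U, Finset.mem_Icc] at h1 h2
    apply hx i hi j hj hij
    exact Finset.disjoint_of_subset_left (h1.1.trans h2.2) disjoint_compl_left
  have h1 : ∑ i ∈ s, (U i).card ≤ 2 ^ Fintype.card α := by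
    rw [← Finset.card_biUnion hU, ← Fintype.card_finset]
    exact Finset.card_le_univ _
  have h2 : ∀ i ∈ s, 2 ^ Fintype.card α ≤ (U i).card * 4 ^ n := by
    intro i hi
    have hsub : B i ⊆ (A i)ᶜ := by
      rw [Finset.subset_compl_iff_disjoint_left]; exact hd i hi
    simp only [U]
    rw [Finset.card_Icc_finset hsub, Finset.card_compl, show 4 = 2 ^ 2 by norm_num, ← pow_mul,
      ← pow_add]
    apply Nat.pow_le_pow_right (by norm_num)
    have := hA i hi
    have := hB i hi
    omega
  have h3 : s.card * 2 ^ Fintype.card α ≤ 4 ^ n * 2 ^ Fintype.card α := by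
    calc s.card * 2 ^ Fintype.card α = ∑ i ∈ s, 2 ^ Fintype.card α := by simp
      _ ≤ ∑ i ∈ s, (U i).card * 4 ^ n := Finset.sum_le_sum h2
      _ = (∑ i ∈ s, (U i).card) * 4 ^ n := by rw [Finset.sum_mul]
      _ ≤ 2 ^ Fintype.card α * 4 ^ n := by gcongr
      _ = _ := by ring
  exact Nat.le_of_mul_le_mul_right h3 (by positivity)

/-- Permutations which `t`-intersect every member of `G`. -/
def itt {n : ℕ} (t : ℕ) (G : Finset (Equiv.Perm (Fin n))) : Finset (Equiv.Perm (Fin n)) :=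
  univ.filter (fun σ => ∀ π ∈ G, t ≤ agreements σ π)

theorem mem_itt {n t : ℕ} {G : Finset (Equiv.Perm (Fin n))} {σ : Equiv.Perm (Fin n)} :
    σ ∈ itt t G ↔ ∀ π ∈ G, t ≤ agreements σ π := by simp [itt]

theorem exists_generating {n t : ℕ} (F : Finset (Equiv.Perm (Fin n))) :
    ∃ G : Finset (Equiv.Perm (Fin n)), G.card ≤ 4 ^ n ∧ itt t G = itt t F := by
  classical
  let C := F.powerset.filter (fun G => itt t G = itt t F)
  have hC : C.Nonempty := ⟨F, by simp [C]⟩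
  obtain ⟨G, hG, hmin⟩ := Finset.exists_min_image C Finset.card hC
  simp only [C, mem_filter, mem_powerset] at hG hmin
  refine ⟨G, ?_, hG.2⟩
  have key : ∀ g ∈ G, ∃ h : Equiv.Perm (Fin n), agreements h g < t ∧
      ∀ g' ∈ G, g' ≠ g → t ≤ agreements h g' := by
    intro g hg
    by_contra hcon
    push Not at hcon
    have : itt t (G.erase g) = itt t F := by
      rw [← hG.2]
      ext σ
      simp only [mem_itt, mem_erase]
      constructor
      · intro hs π hπ
        by_cases hpg : π = g
        · subst hpg
          by_contra hlt
          obtain ⟨g', hg', hne, hlt'⟩ := hcon σ (by omega)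
          exact absurd (hs g' ⟨hne, hg'⟩) (by omega)
        · exact hs π ⟨hpg, hπ⟩
      · intro hs π hπ
        exact hs π hπ.2
    have h2 := hmin (G.erase g) ⟨(Finset.erase_subset _ _).trans hG.1, this⟩
    have h3 := Finset.card_erase_lt_of_mem hg
    omega
  choose! h hh1 hh2 using key
  apply setpair G (fun g => gr g) (fun g => gr (h g) \ gr g) n
  · intro i _; exact (card_gr i).le
  · intro i _
    exact (Finset.card_le_card Finset.sdiff_subset).trans (card_gr _).le
  · intro i _; exact Finset.disjoint_sdiff
  · intro i hi j hj hij hdis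
    have h1 := hh1 i hi
    have h2 := hh2 i hi j hj hij.symm
    rw [← card_gr_inter] at h1 h2
    have h3 : gr (h i) ∩ gr j ⊆ gr (h i) ∩ gr i := by
      intro e he
      rw [mem_inter] at he ⊢
      refine ⟨he.1, ?_⟩
      by_contra hne
      exact (Finset.disjoint_left.1 hdis) (mem_sdiff.2 ⟨he.1, hne⟩) he.2
    have := Finset.card_le_card h3
    omega

theorem agreements_comm {n : ℕ} (σ π : Equiv.Perm (Fin n)) :
    agreements σ π = agreements π σ := by
  rw [← card_gr_inter, ← card_gr_inter, Finset.inter_comm]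

theorem exists_maximal {n t : ℕ} (ht : t ≤ n) (F : Finset (Equiv.Perm (Fin n)))
    (hF : IsTIntersecting t F) : ∃ M, F ⊆ M ∧ IsTIntersecting t M ∧ itt t M = M := by
  classical
  let C := (univ : Finset (Finset (Equiv.Perm (Fin n)))).filter
    (fun M => F ⊆ M ∧ IsTIntersecting t M)
  obtain ⟨M, hM, hmax⟩ := Finset.exists_max_image C Finset.card ⟨F, by simp [C, hF]⟩
  simp only [C, mem_filter, mem_univ, true_and] at hM hmax
  refine ⟨M, hM.1, hM.2, ?_⟩
  ext σ
  constructor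
  · intro hs
    by_contra hn
    rw [mem_itt] at hs
    have := hmax (insert σ M) ⟨hM.1.trans (Finset.subset_insert _ _), by
      intro a ha b hb
      rw [mem_insert] at ha hb
      rcases ha with rfl | ha <;> rcases hb with rfl | hb
      · simpa [agreements] using ht
      · exact hs b hb
      · rw [agreements_comm]; exact hs a ha
      · exact hM.2 a ha b hb⟩
    rw [Finset.card_insert_of_notMem hn] at this
    omega
  · intro hs
    rw [mem_itt]
    intro π hp
    exact hM.2 σ hs π hp

theorem exists_code {α : Type*} [Fintype α] [DecidableEq α] (k : ℕ) (G : Finset α)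
    (hG : G.card ≤ k) : ∃ f : Fin k → Option α,
      (univ.filter (fun a => ∃ j, f j = some a)) = G := by
  let e := G.equivFin
  refine ⟨fun j => if h : j.1 < G.card then some (e.symm ⟨j.1, h⟩).1 else none, ?_⟩
  ext a
  simp only [mem_filter, mem_univ, true_and]
  constructor
  · rintro ⟨j, hj⟩
    split_ifs at hj with h
    rw [Option.some.injEq] at hj
    rw [← hj]
    exact (e.symm _).2
  · intro ha
    refine ⟨⟨(e ⟨a, ha⟩).1, (e ⟨a, ha⟩).2.trans_le hG⟩, ?_⟩
    simp

theorem count_bounded {n t K : ℕ} (ht : t ≤ n) (Fs : Finset (Finset (Equiv.Perm (Fin n))))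
    (h1 : ∀ F ∈ Fs, IsTIntersecting t F)
    (h2 : ∀ F ∈ Fs, ∀ M, F ⊆ M → IsTIntersecting t M → M.card ≤ K) :
    Fs.card ≤ (n.factorial + 1) ^ (4 ^ n) * 2 ^ K := by
  classical
  let φ : (Fin (4 ^ n) → Option (Equiv.Perm (Fin n))) → Finset (Equiv.Perm (Fin n)) :=
    fun f => univ.filter (fun a => ∃ j, f j = some a)
  let U : (Fin (4 ^ n) → Option (Equiv.Perm (Fin n))) → Finset (Finset (Equiv.Perm (Fin n))) :=
    fun f => if (itt t (φ f)).card ≤ K then (itt t (φ f)).powerset else ∅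
  have hsub : Fs ⊆ univ.biUnion U := by
    intro F hF
    obtain ⟨M, hFM, hM, hMM⟩ := exists_maximal ht F (h1 F hF)
    obtain ⟨G, hG, hGM⟩ := exists_generating (t := t) M
    obtain ⟨f, hf⟩ := exists_code (4 ^ n) G hG
    rw [Finset.mem_biUnion]
    refine ⟨f, mem_univ _, ?_⟩
    have e : itt t (φ f) = M := by simp only [φ]; rw [hf, hGM, hMM]
    simp only [U]
    rw [e, if_pos (h2 F hF M hFM hM), mem_powerset]
    exact hFM
  calc Fs.card ≤ (univ.biUnion U).card := Finset.card_le_card hsub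
    _ ≤ (univ : Finset (Fin (4 ^ n) → Option (Equiv.Perm (Fin n)))).card * 2 ^ K := by
        apply Finset.card_biUnion_le_card_mul
        intro f _
        simp only [U]
        split_ifs with h
        · rw [Finset.card_powerset]
          exact Nat.pow_le_pow_right (by norm_num) h
        · simp
    _ = _ := by
        rw [Finset.card_univ, Fintype.card_fun, Fintype.card_option, Fintype.card_perm,
          Fintype.card_fin, Fintype.card_fin]

end TI

namespace TI
open Finset

/-- Number of members of `F` whose graph contains `A`. -/
def deg {n : ℕ} (F : Finset (Equiv.Perm (Fin n))) (A : Finset (Fin n × Fin n)) : ℕ :=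
  (F.filter (fun σ => A ⊆ gr σ)).card

theorem choose_inter {n : ℕ} (B E : Finset (Fin n × Fin n)) (s : ℕ) :
    (B ∩ E).card.choose s = ∑ A ∈ powersetCard s E, if A ⊆ B then 1 else 0 := by
  rw [← Finset.card_powersetCard, ← Finset.card_filter]
  congr 1
  ext A
  simp only [mem_powersetCard, mem_filter, subset_inter_iff]
  tauto

theorem sum_choose_one {n : ℕ} (F : Finset (Equiv.Perm (Fin n))) (E : Finset (Fin n × Fin n))
    (s : ℕ) : ∑ σ ∈ F, (gr σ ∩ E).card.choose s = ∑ A ∈ powersetCard s E, deg F A := by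
  simp only [choose_inter]
  rw [Finset.sum_comm]
  apply Finset.sum_congr rfl
  intro A _
  rw [deg, Finset.card_filter]

theorem sum_choose_two {n : ℕ} (F G : Finset (Equiv.Perm (Fin n)))
    (E : Finset (Fin n × Fin n)) (s : ℕ) :
    ∑ σ ∈ F, ∑ π ∈ G, ((gr σ ∩ gr π) ∩ E).card.choose s
      = ∑ A ∈ powersetCard s E, deg F A * deg G A := by
  simp only [choose_inter]
  have : ∀ σ ∈ F, (∑ π ∈ G, ∑ A ∈ powersetCard s E, if A ⊆ gr σ ∩ gr π then 1 else 0)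
      = ∑ A ∈ powersetCard s E, (if A ⊆ gr σ then 1 else 0) * deg G A := by
    intro σ _
    rw [Finset.sum_comm]
    apply Finset.sum_congr rfl
    intro A _
    rw [deg, Finset.card_filter, Finset.mul_sum]
    apply Finset.sum_congr rfl
    intro π _
    simp only [subset_inter_iff]
    split_ifs <;> simp_all
  rw [Finset.sum_congr rfl this, Finset.sum_comm]
  apply Finset.sum_congr rfl
  intro A _
  rw [← Finset.sum_mul]
  congr 1
  rw [deg, Finset.card_filter]

theorem bonf (X : ℕ) (h : 1 ≤ X) : 1 + X.choose 2 ≤ X + X.choose 3 := by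
  obtain ⟨k, rfl⟩ : ∃ k, X = k + 1 := ⟨X - 1, by omega⟩
  have h1 : (k + 1).choose 2 = k.choose 1 + k.choose 2 := Nat.choose_succ_succ k 1
  have h2 : (k + 1).choose 3 = k.choose 2 + k.choose 3 := Nat.choose_succ_succ k 2
  rw [h1, h2, Nat.choose_one_right]
  omega

theorem pair_core {n : ℕ} (hn : 1 ≤ n) (F G : Finset (Equiv.Perm (Fin n)))
    (E : Finset (Fin n × Fin n)) (hF : F.Nonempty) (hG : G.Nonempty)
    (dF : ∀ A ⊆ E, 1 ≤ A.card → A.card ≤ 3 →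
      (deg F A : ℝ) ≤ (11 / (10 * n)) ^ A.card * F.card)
    (dG : ∀ A ⊆ E, 1 ≤ A.card → A.card ≤ 3 →
      (deg G A : ℝ) ≤ (11 / (10 * n)) ^ A.card * G.card)
    (r : ℝ) (hr : 9 / 20 * (n : ℝ) ^ 2 ≤ r)
    (rF : ∀ σ ∈ F, r ≤ ((gr σ ∩ E).card.choose 2 : ℕ))
    (rG : ∀ σ ∈ G, r ≤ ((gr σ ∩ E).card.choose 2 : ℕ)) :
    ∃ σ ∈ F, ∃ π ∈ G, (gr σ ∩ gr π) ∩ E = ∅ := by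
  classical
  by_contra hcon
  push Not at hcon
  have hn0 : (0 : ℝ) < n := by exact_mod_cast hn
  set a : ℝ := (F.card : ℝ) with ha
  set b : ℝ := (G.card : ℝ) with hb
  have ha0 : 0 < a := by rw [ha]; exact_mod_cast hF.card_pos
  have hb0 : 0 < b := by rw [hb]; exact_mod_cast hG.card_pos
  set u : ℝ := 11 / (10 * n) with hu
  have hu0 : 0 < u := by rw [hu]; positivity
  have hun : u * n = 11 / 10 := by rw [hu]; field_simp
  have hgE : ∀ σ : Equiv.Perm (Fin n), (gr σ ∩ E).card ≤ n := fun σ =>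
    (Finset.card_le_card Finset.inter_subset_left).trans (card_gr σ).le
  have key : ∑ σ ∈ F, ∑ π ∈ G, (1 + ((gr σ ∩ gr π) ∩ E).card.choose 2) ≤
      ∑ σ ∈ F, ∑ π ∈ G, (((gr σ ∩ gr π) ∩ E).card.choose 1 +
        ((gr σ ∩ gr π) ∩ E).card.choose 3) := by
    apply Finset.sum_le_sum
    intro σ hσ
    apply Finset.sum_le_sum
    intro π hπ
    rw [Nat.choose_one_right]
    apply bonf
    exact Finset.card_pos.2 (hcon σ hσ π hπ)
  simp only [Finset.sum_add_distrib] at key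
  rw [sum_choose_two, sum_choose_two, sum_choose_two] at key
  simp only [sum_const, smul_eq_mul, mul_one] at key
  have key' : a * b + ∑ A ∈ powersetCard 2 E, (deg F A : ℝ) * deg G A ≤
      ∑ A ∈ powersetCard 1 E, (deg F A : ℝ) * deg G A +
      ∑ A ∈ powersetCard 3 E, (deg F A : ℝ) * deg G A := by
    rw [ha, hb]
    exact_mod_cast key
  have up : ∀ s, 1 ≤ s → s ≤ 3 → ∑ A ∈ powersetCard s E, (deg F A : ℝ) * deg G A ≤
      (u ^ s * a) * (b * (n ^ s / s.factorial)) := by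
    intro s hs1 hs3
    calc ∑ A ∈ powersetCard s E, (deg F A : ℝ) * deg G A
        ≤ ∑ A ∈ powersetCard s E, (u ^ s * a) * deg G A := by
          apply Finset.sum_le_sum
          intro A hA
          rw [mem_powersetCard] at hA
          have := dF A hA.1 (by omega) (by omega)
          rw [hA.2] at this
          gcongr
      _ = (u ^ s * a) * ((∑ A ∈ powersetCard s E, deg G A : ℕ) : ℝ) := by
          rw [← Finset.mul_sum]; push_cast; rfl
      _ ≤ (u ^ s * a) * (b * (n ^ s / s.factorial)) := by
          rw [← sum_choose_one]
          push_cast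
          gcongr
          calc ∑ σ ∈ G, (((gr σ ∩ E).card.choose s : ℕ) : ℝ)
              ≤ ∑ σ ∈ G, ((n : ℝ) ^ s / s.factorial) := by
                apply Finset.sum_le_sum
                intro σ _
                refine le_trans ?_ (Nat.choose_le_pow_div s n)
                exact_mod_cast Nat.choose_le_choose s (hgE σ)
            _ = _ := by rw [Finset.sum_const, nsmul_eq_mul]
  have up1 := up 1 le_rfl (by norm_num)
  have up3 := up 3 (by norm_num) le_rfl
  have lowF : a * r ≤ ∑ A ∈ powersetCard 2 E, (deg F A : ℝ) := by
    have := sum_choose_one F E 2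
    have h2 : ∑ A ∈ powersetCard 2 E, (deg F A : ℝ) =
      ∑ σ ∈ F, (((gr σ ∩ E).card.choose 2 : ℕ) : ℝ) := by exact_mod_cast this.symm
    rw [h2]
    have := Finset.card_nsmul_le_sum F _ r rF
    simpa [nsmul_eq_mul] using this
  have lowG : b * r ≤ ∑ A ∈ powersetCard 2 E, (deg G A : ℝ) := by
    have := sum_choose_one G E 2
    have h2 : ∑ A ∈ powersetCard 2 E, (deg G A : ℝ) =
      ∑ σ ∈ G, (((gr σ ∩ E).card.choose 2 : ℕ) : ℝ) := by exact_mod_cast this.symm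
    rw [h2]
    have := Finset.card_nsmul_le_sum G _ r rG
    simpa [nsmul_eq_mul] using this
  have hN : ((powersetCard 2 E).card : ℝ) ≤ n ^ 4 / 2 := by
    rw [Finset.card_powersetCard]
    have h1 : E.card ≤ n * n := by
      have := Finset.card_le_univ E
      simpa using this
    calc ((E.card.choose 2 : ℕ) : ℝ) ≤ (((n * n).choose 2 : ℕ) : ℝ) := by
          exact_mod_cast Nat.choose_le_choose 2 h1
      _ ≤ ((n * n : ℕ) : ℝ) ^ 2 / (Nat.factorial 2) := Nat.choose_le_pow_div 2 _
      _ = _ := by simp only [Nat.factorial]; push_cast; ring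
  have mid : u ^ 2 * (a * (b * r) + b * (a * r)) - u ^ 4 * a * b * (n ^ 4 / 2) ≤
      ∑ A ∈ powersetCard 2 E, (deg F A : ℝ) * deg G A := by
    calc u ^ 2 * (a * (b * r) + b * (a * r)) - u ^ 4 * a * b * (n ^ 4 / 2)
        ≤ u ^ 2 * (a * (∑ A ∈ powersetCard 2 E, (deg G A : ℝ)) +
            b * (∑ A ∈ powersetCard 2 E, (deg F A : ℝ)))
            - u ^ 4 * a * b * (powersetCard 2 E).card := by gcongr
      _ = ∑ A ∈ powersetCard 2 E,
            (u ^ 2 * (a * (deg G A : ℝ) + b * (deg F A : ℝ)) - u ^ 4 * a * b) := by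
          rw [Finset.sum_sub_distrib, Finset.sum_const, nsmul_eq_mul, ← Finset.mul_sum,
            Finset.sum_add_distrib, ← Finset.mul_sum, ← Finset.mul_sum]
          ring
      _ ≤ _ := by
          apply Finset.sum_le_sum
          intro A hA
          rw [mem_powersetCard] at hA
          have h1 := dF A hA.1 (by omega) (by omega)
          have h2 := dG A hA.1 (by omega) (by omega)
          rw [hA.2] at h1 h2
          nlinarith [mul_nonneg (sub_nonneg.2 h1) (sub_nonneg.2 h2)]
  have e1 : (u ^ 1 * a) * (b * (n ^ 1 / (Nat.factorial 1))) = (11 / 10) * (a * b) := by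
    rw [← hun]; simp [Nat.factorial]; ring
  have e3 : (u ^ 3 * a) * (b * (n ^ 3 / (Nat.factorial 3))) = (11 / 10) ^ 3 / 6 * (a * b) := by
    rw [← hun]; simp [Nat.factorial]; ring
  have e4 : u ^ 4 * a * b * (n ^ 4 / 2) = (11 / 10) ^ 4 / 2 * (a * b) := by
    rw [← hun]; ring
  have e2 : (9 / 10) * (11 / 10) ^ 2 * (a * b) ≤ u ^ 2 * (a * (b * r) + b * (a * r)) := by
    calc (9 / 10) * (11 / 10) ^ 2 * (a * b) = u ^ 2 * (a * b) * 2 * (9 / 20 * (n : ℝ) ^ 2) := by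
          rw [← hun]; ring
      _ ≤ u ^ 2 * (a * b) * 2 * r := by gcongr
      _ = _ := by ring
  rw [e1] at up1
  rw [e3] at up3
  rw [e4] at mid
  have hab : 0 < a * b := by positivity
  nlinarith

/-- `G` is spread outside `S` (with constant `21/20`, up to three extra entries). -/
def Spread {n : ℕ} (S : Finset (Fin n × Fin n)) (G : Finset (Equiv.Perm (Fin n))) : Prop :=
  G.Nonempty ∧ (∀ σ ∈ G, S ⊆ gr σ) ∧ ∀ A : Finset (Fin n × Fin n), Disjoint A S → A.card ≤ 3 →
    (deg G A : ℝ) ≤ (21 / (20 * n)) ^ A.card * G.card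

theorem spread_trim {n q : ℕ} (hn : 1 ≤ n) (hq : 100 * q ≤ n) {S T : Finset (Fin n × Fin n)}
    (hT : T.card ≤ q) {F : Finset (Equiv.Perm (Fin n))} (hF : Spread S F) :
    ∃ F' ⊆ F, F'.Nonempty ∧ (∀ σ ∈ F', Disjoint (gr σ) (T \ S)) ∧
      ∀ A : Finset (Fin n × Fin n), Disjoint A S → 1 ≤ A.card → A.card ≤ 3 →
      (deg F' A : ℝ) ≤ (11 / (10 * n)) ^ A.card * F'.card := by
  classical
  have hn0 : (0 : ℝ) < n := by exact_mod_cast hn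
  have hq' : 100 * (q : ℝ) ≤ n := by exact_mod_cast hq
  obtain ⟨hne, hS, hsp⟩ := hF
  have hF0 : (0 : ℝ) < F.card := by exact_mod_cast hne.card_pos
  let F' := F.filter (fun σ => Disjoint (gr σ) (T \ S))
  have hcov : F ⊆ F' ∪ (T \ S).biUnion (fun e => F.filter (fun σ => {e} ⊆ gr σ)) := by
    intro σ hσ
    by_cases hd : Disjoint (gr σ) (T \ S)
    · exact mem_union_left _ (mem_filter.2 ⟨hσ, hd⟩)
    · rw [Finset.not_disjoint_iff] at hd
      obtain ⟨e, he1, he2⟩ := hd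
      refine mem_union_right _ (mem_biUnion.2 ⟨e, he2, mem_filter.2 ⟨hσ, by simpa using he1⟩⟩)
  have h1 : (F.card : ℝ) ≤ F'.card + ∑ e ∈ T \ S, (deg F {e} : ℝ) := by
    have := (Finset.card_le_card hcov).trans ((Finset.card_union_le _ _).trans
      (Nat.add_le_add_left Finset.card_biUnion_le _))
    exact_mod_cast this
  have h2 : ∑ e ∈ T \ S, (deg F {e} : ℝ) ≤ q * (21 / (20 * n) * F.card) := by
    calc ∑ e ∈ T \ S, (deg F {e} : ℝ) ≤ ∑ e ∈ T \ S, (21 / (20 * n) * F.card : ℝ) := by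
          apply Finset.sum_le_sum
          intro e he
          have := hsp {e} (by simpa using (mem_sdiff.1 he).2) (by simp)
          simpa using this
      _ = ((T \ S).card : ℝ) * (21 / (20 * n) * F.card) := by simp
      _ ≤ _ := by
          gcongr
          exact (Finset.card_le_card Finset.sdiff_subset).trans hT
  have h3 : (q : ℝ) * (21 / (20 * n) * F.card) ≤ 21 / 2000 * F.card := by
    have : (q : ℝ) * (21 / (20 * n)) ≤ 21 / 2000 := by
      rw [mul_div_assoc', div_le_div_iff₀ (by positivity) (by norm_num)]
      nlinarith
    calc (q : ℝ) * (21 / (20 * n) * F.card) = (q : ℝ) * (21 / (20 * n)) * F.card := by ring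
      _ ≤ _ := by gcongr
  have h4 : (F.card : ℝ) ≤ 22 / 21 * F'.card := by linarith
  refine ⟨F', Finset.filter_subset _ _, ?_, fun σ hσ => (mem_filter.1 hσ).2, ?_⟩
  · rw [← Finset.card_pos]
    have : (0 : ℝ) < F'.card := by linarith
    exact_mod_cast this
  · intro A hA h1A h3A
    have hle : (deg F' A : ℝ) ≤ deg F A := by
      have : deg F' A ≤ deg F A :=
        Finset.card_le_card (Finset.filter_subset_filter _ (Finset.filter_subset _ _))
      exact_mod_cast this
    calc (deg F' A : ℝ) ≤ deg F A := hle
      _ ≤ (21 / (20 * n)) ^ A.card * F.card := hsp A hA h3A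
      _ ≤ (21 / (20 * n)) ^ A.card * (22 / 21 * F'.card) := by gcongr
      _ ≤ (21 / (20 * n)) ^ A.card * ((22 / 21) ^ A.card * F'.card) := by
          gcongr
          exact le_self_pow₀ (by norm_num) (by omega)
      _ = _ := by
          rw [← mul_assoc, ← mul_pow]
          congr 2
          field_simp
          norm_num

theorem spread_pair {n q : ℕ} (hn : 100 ≤ n) (hq : 100 * q ≤ n) {S T : Finset (Fin n × Fin n)}
    (hS : S.card ≤ q) (hT : T.card ≤ q) {F G : Finset (Equiv.Perm (Fin n))} (hF : Spread S F)
    (hG : Spread T G) : ∃ σ ∈ F, ∃ π ∈ G, gr σ ∩ gr π ⊆ S ∩ T := by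
  classical
  obtain ⟨F', hF', hne, hd, hdeg⟩ := spread_trim (by omega) hq hT hF
  obtain ⟨G', hG', hneG, hdG, hdegG⟩ := spread_trim (by omega) hq hS hG
  have hcardE : ∀ σ : Equiv.Perm (Fin n),
      9 / 20 * (n : ℝ) ^ 2 ≤ ((gr σ ∩ (S ∪ T)ᶜ).card.choose 2 : ℕ) := by
    intro σ
    have h1 : n - 2 * q ≤ (gr σ ∩ (S ∪ T)ᶜ).card := by
      rw [← Finset.sdiff_eq_inter_compl]
      have h2 := Finset.le_card_sdiff (S ∪ T) (gr σ)
      have h3 := Finset.card_union_le S T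
      rw [card_gr] at h2
      omega
    have h2 : (n : ℝ) - 2 * q ≤ (gr σ ∩ (S ∪ T)ᶜ).card := by
      have : n ≤ (gr σ ∩ (S ∪ T)ᶜ).card + 2 * q := by omega
      have : (n : ℝ) ≤ (gr σ ∩ (S ∪ T)ᶜ).card + 2 * q := by exact_mod_cast this
      linarith
    have hq' : 100 * (q : ℝ) ≤ n := by exact_mod_cast hq
    have hn' : (100 : ℝ) ≤ n := by exact_mod_cast hn
    rw [Nat.cast_choose_two]
    set x : ℝ := ((gr σ ∩ (S ∪ T)ᶜ).card : ℝ)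
    have h3 : 98 / 100 * (n : ℝ) ≤ x := by linarith
    have h4 : 97 / 100 * (n : ℝ) ≤ x - 1 := by linarith
    have h5 : (98 / 100 * (n : ℝ)) * (97 / 100 * (n : ℝ)) ≤ x * (x - 1) := by
      apply mul_le_mul h3 h4 (by positivity) (by linarith)
    nlinarith
  obtain ⟨σ, hσ, π, hπ, hE⟩ := pair_core (by omega) F' G' (S ∪ T)ᶜ hne hneG
    (fun A hA => hdeg A (by
      rw [Finset.disjoint_left]; intro e he hs
      have := hA he
      simp [hs] at this))
    (fun A hA => hdegG A (by
      rw [Finset.disjoint_left]; intro e he hs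
      have := hA he
      simp [hs] at this))
    _ le_rfl (fun σ _ => hcardE σ) (fun σ _ => hcardE σ)
  refine ⟨σ, hF' hσ, π, hG' hπ, ?_⟩
  intro e he
  have he' := mem_inter.1 he
  have h1 : e ∈ S ∪ T := by
    by_contra hc
    have : e ∈ (gr σ ∩ gr π) ∩ (S ∪ T)ᶜ := mem_inter.2 ⟨he, mem_compl.2 hc⟩
    rw [hE] at this
    simp at this
  have h2 := Finset.disjoint_left.1 (hd σ hσ) he'.1
  have h3 := Finset.disjoint_left.1 (hdG π hπ) he'.2
  rw [mem_sdiff] at h2 h3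
  rw [mem_union] at h1
  rw [mem_inter]
  tauto

end TI

namespace TI
open Finset

theorem exists_spread {n q t : ℕ} (hn : 1 ≤ n)
    (hb : ∀ s, s ≤ q → q < s + 3 →
      6 * (((n - s).factorial : ℕ) : ℝ) * (20 * n / 21) ^ s < ((n - t).factorial : ℕ))
    (H : Finset (Equiv.Perm (Fin n))) (hH : (n - t).factorial ≤ 6 * H.card) :
    ∃ S : Finset (Fin n × Fin n), S.card ≤ q ∧ ∃ H' ⊆ H, Spread S H' := by
  classical
  have hn0 : (0 : ℝ) < n := by exact_mod_cast hn
  set R : ℝ := 20 * n / 21 with hR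
  have hR0 : 0 < R := by rw [hR]; positivity
  obtain ⟨S, hS, hmax⟩ := Finset.exists_max_image
    ((univ : Finset (Finset (Fin n × Fin n))).filter (fun S => S.card ≤ q))
    (fun S => (deg H S : ℝ) * R ^ S.card) ⟨∅, by simp⟩
  simp only [mem_filter, mem_univ, true_and] at hS hmax
  have h0 : (H.card : ℝ) ≤ deg H S * R ^ S.card := by
    have := hmax ∅ (by simp)
    simpa [deg] using this
  have hH' : (((n - t).factorial : ℕ) : ℝ) ≤ 6 * H.card := by exact_mod_cast hH
  have hpos : (0 : ℝ) < ((n - t).factorial : ℕ) := by exact_mod_cast Nat.factorial_pos _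
  have hsmall : S.card + 3 ≤ q := by
    by_contra hc
    have h1 := hb S.card hS (by omega)
    have h2 : (deg H S : ℝ) ≤ ((n - S.card).factorial : ℕ) := by
      have : deg H S ≤ (star S).card := by
        apply Finset.card_le_card
        intro σ hσ
        exact mem_star.2 (mem_filter.1 hσ).2
      exact_mod_cast this.trans (card_star_le S)
    have h3 : (deg H S : ℝ) * R ^ S.card ≤ ((n - S.card).factorial : ℕ) * R ^ S.card := by
      gcongr
    linarith
  refine ⟨S, hS, H.filter (fun σ => S ⊆ gr σ), Finset.filter_subset _ _, ?_, ?_, ?_⟩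
  · rw [← Finset.card_pos]
    by_contra hc
    have : deg H S = 0 := by unfold deg; omega
    rw [this] at h0
    simp only [Nat.cast_zero, zero_mul] at h0
    linarith
  · intro σ hσ
    exact (mem_filter.1 hσ).2
  · intro A hA h3
    have h1 := hmax (S ∪ A) ((Finset.card_union_le _ _).trans (by omega))
    rw [Finset.card_union_of_disjoint hA.symm, pow_add] at h1
    have e : deg (H.filter (fun σ => S ⊆ gr σ)) A = deg H (S ∪ A) := by
      unfold deg
      rw [Finset.filter_filter]
      congr 1
      ext σ
      simp [Finset.union_subset_iff]
    have e2 : (H.filter (fun σ => S ⊆ gr σ)).card = deg H S := rfl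
    rw [e, e2]
    have h4 : (deg H (S ∪ A) : ℝ) * R ^ A.card ≤ deg H S := by
      have h5 : (deg H (S ∪ A) : ℝ) * R ^ A.card * R ^ S.card ≤ deg H S * R ^ S.card := by
        linarith
      exact le_of_mul_le_mul_right h5 (by positivity)
    have h6 : (21 / (20 * n) : ℝ) = R⁻¹ := by rw [hR]; field_simp
    rw [h6, inv_pow, inv_mul_eq_div, le_div_iff₀ (by positivity)]
    exact h4

theorem nontrivial_bound {n q t : ℕ} (hn : 100 ≤ n) (hq : 100 * q ≤ n) (ht : t + 2 ≤ n)
    (hqt : 6 * q ^ (t + 1) ≤ n - t)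
    (hb : ∀ s, s ≤ q → q < s + 3 →
      6 * (((n - s).factorial : ℕ) : ℝ) * (20 * n / 21) ^ s < ((n - t).factorial : ℕ))
    (F : Finset (Equiv.Perm (Fin n))) (hF : IsTIntersecting t F) (hnt : ¬ IsTrivial t F) :
    6 * F.card ≤ 5 * (n - t).factorial := by
  classical
  let 𝒮 : Finset (Finset (Fin n × Fin n)) :=
    univ.filter (fun S => S.card ≤ q ∧ ∃ G ⊆ F, Spread S G)
  have memS : ∀ S, S ∈ 𝒮 ↔ (S.card ≤ q ∧ ∃ G ⊆ F, Spread S G) := by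
    intro S; simp [𝒮]
  have hpairs : ∀ S ∈ 𝒮, ∀ T ∈ 𝒮, t ≤ (S ∩ T).card := by
    intro S hS T hT
    obtain ⟨hSq, G, hG, hsp⟩ := (memS S).1 hS
    obtain ⟨hTq, G', hG', hsp'⟩ := (memS T).1 hT
    obtain ⟨σ, hσ, π, hπ, hsub⟩ := spread_pair hn hq hSq hTq hsp hsp'
    have h1 := hF σ (hG hσ) π (hG' hπ)
    rw [← card_gr_inter] at h1
    exact h1.trans (Finset.card_le_card hsub)
  let F' := F.filter (fun σ => ∀ S ∈ 𝒮, ¬ S ⊆ gr σ)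
  have hF' : 6 * F'.card < (n - t).factorial := by
    by_contra hc
    obtain ⟨S, hS, H', hH', hsp⟩ := exists_spread (by omega) hb F' (by omega)
    have hmem : S ∈ 𝒮 := (memS S).2 ⟨hS, H', hH'.trans (Finset.filter_subset _ _), hsp⟩
    obtain ⟨⟨σ, hσ⟩, hall, _⟩ := hsp
    exact (mem_filter.1 (hH' hσ)).2 S hmem (hall σ hσ)
  by_cases hA : ∃ T₀ : Finset (Fin n × Fin n), T₀.card = t ∧ ∀ S ∈ 𝒮, T₀ ⊆ S
  · obtain ⟨T₀, hT₀, hall⟩ := hA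
    have hcov : F ⊆ F' ∪ F.filter (fun σ => T₀ ⊆ gr σ) := by
      intro σ hσ
      by_cases h : ∀ S ∈ 𝒮, ¬ S ⊆ gr σ
      · exact mem_union_left _ (mem_filter.2 ⟨hσ, h⟩)
      · push Not at h
        obtain ⟨S, hS, hSσ⟩ := h
        exact mem_union_right _ (mem_filter.2 ⟨hσ, (hall S hS).trans hSσ⟩)
    have hc1 := (Finset.card_le_card hcov).trans (Finset.card_union_le _ _)
    by_cases hemp : (F.filter (fun σ => T₀ ⊆ gr σ)).Nonempty
    · obtain ⟨σ₀, hσ₀⟩ := hemp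
      have hσ₀' := (mem_filter.1 hσ₀).2
      have hex : ∃ σ ∈ F, ¬ T₀ ⊆ gr σ := by
        by_contra hcon
        push Not at hcon
        apply hnt
        refine ⟨T₀.image Prod.fst, (card_fst hσ₀').trans hT₀, σ₀, ?_⟩
        intro σ hσ
        exact (mem_star_iff hσ₀').1 (mem_star.2 (hcon σ hσ))
      obtain ⟨σ, hσ, hσT⟩ := hex
      have hav := card_avoid hσ₀' σ (by omega)
      have hst := card_star hσ₀'
      rw [hT₀] at hav hst
      have hdis : Disjoint (F.filter (fun σ => T₀ ⊆ gr σ))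
          ((star T₀).filter (fun π => gr π ∩ gr σ ⊆ T₀)) := by
        rw [Finset.disjoint_left]
        intro π h1 h2
        have h3 := (mem_filter.1 h2).2
        have h4 := hF π (mem_filter.1 h1).1 σ hσ
        rw [← card_gr_inter] at h4
        have h5 : gr π ∩ gr σ = T₀ := Finset.eq_of_subset_of_card_le h3 (by omega)
        apply hσT
        rw [← h5]
        exact Finset.inter_subset_right
      have hun : F.filter (fun σ => T₀ ⊆ gr σ) ∪
          ((star T₀).filter (fun π => gr π ∩ gr σ ⊆ T₀)) ⊆ star T₀ := by
        apply Finset.union_subset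
        · intro π hπ
          exact mem_star.2 (mem_filter.1 hπ).2
        · exact Finset.filter_subset _ _
      have h6 := Finset.card_le_card hun
      rw [Finset.card_union_of_disjoint hdis] at h6
      omega
    · rw [Finset.not_nonempty_iff_eq_empty] at hemp
      rw [hemp, Finset.card_empty] at hc1
      omega
  · push Not at hA
    by_cases hne : 𝒮.Nonempty
    · obtain ⟨S₁, hS₁⟩ := hne
      choose! f hf1 hf2 using hA
      have hcov : F ⊆ F' ∪ (powersetCard t S₁).biUnion (fun T₀ =>
          (f T₀).biUnion (fun e => if e ∈ T₀ then ∅ else star (insert e T₀))) := by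
        intro σ hσ
        by_cases h : ∀ S ∈ 𝒮, ¬ S ⊆ gr σ
        · exact mem_union_left _ (mem_filter.2 ⟨hσ, h⟩)
        · push Not at h
          obtain ⟨S, hS, hSσ⟩ := h
          obtain ⟨T₀, hT₀, hT₀c⟩ := Finset.exists_subset_card_eq (hpairs S hS S₁ hS₁)
          have hT₀S : T₀ ⊆ S := hT₀.trans Finset.inter_subset_left
          have hT₀S₁ : T₀ ⊆ S₁ := hT₀.trans Finset.inter_subset_right
          have : ∃ e ∈ S ∩ f T₀, e ∉ T₀ := by
            by_contra hcon
            push Not at hcon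
            have h5 : S ∩ f T₀ = T₀ := Finset.eq_of_subset_of_card_le hcon (by
              rw [hT₀c]; exact hpairs S hS _ (hf1 T₀ hT₀c))
            apply hf2 T₀ hT₀c
            intro x hx
            have : x ∈ S ∩ f T₀ := by rw [h5]; exact hx
            exact (mem_inter.1 this).2
          obtain ⟨e, he, heT⟩ := this
          apply mem_union_right
          rw [mem_biUnion]
          refine ⟨T₀, mem_powersetCard.2 ⟨hT₀S₁, hT₀c⟩, ?_⟩
          rw [mem_biUnion]
          refine ⟨e, (mem_inter.1 he).2, ?_⟩
          rw [if_neg heT, mem_star]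
          exact (Finset.insert_subset (mem_inter.1 he).1 hT₀S).trans hSσ
      have hc1 := (Finset.card_le_card hcov).trans (Finset.card_union_le _ _)
      have hS₁q := ((memS S₁).1 hS₁).1
      have hc2 : ((powersetCard t S₁).biUnion (fun T₀ =>
          (f T₀).biUnion (fun e => if e ∈ T₀ then ∅ else star (insert e T₀)))).card ≤
          q ^ t * (q * (n - (t + 1)).factorial) := by
        refine (Finset.card_biUnion_le_card_mul _ _ (q * (n - (t + 1)).factorial) ?_).trans ?_
        · intro T₀ hT₀
          have hT₀c := (mem_powersetCard.1 hT₀).2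
          refine (Finset.card_biUnion_le_card_mul _ _ ((n - (t + 1)).factorial) ?_).trans ?_
          · intro e _
            split_ifs with h
            · simp
            · have := card_star_le (insert e T₀)
              rwa [Finset.card_insert_of_notMem h, hT₀c] at this
          · gcongr
            exact ((memS _).1 (hf1 T₀ hT₀c)).1
        · gcongr
          rw [Finset.card_powersetCard]
          exact (Nat.choose_le_choose t hS₁q).trans (Nat.choose_le_pow q t)
      have hfac : (n - t).factorial = (n - t) * (n - (t + 1)).factorial := by
        have : n - t = (n - (t + 1)) + 1 := by omega
        rw [this, Nat.factorial_succ]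
      have hc3 : 6 * (q ^ t * (q * (n - (t + 1)).factorial)) ≤ (n - t).factorial := by
        rw [hfac]
        calc 6 * (q ^ t * (q * (n - (t + 1)).factorial))
            = (6 * q ^ (t + 1)) * (n - (t + 1)).factorial := by ring
          _ ≤ _ := by gcongr
      omega
    · rw [Finset.not_nonempty_iff_eq_empty] at hne
      have : F' = F := by simp [F', hne]
      rw [this] at hF'
      omega

end TI

namespace TI
open Finset Filter

theorem fac_bound {n q t s : ℕ} (hs : s ≤ q) (hq : 2 * q ^ 2 ≤ n) (ht : t ≤ n) (hn : 1 ≤ n)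
    (h : 12 * (n : ℝ) ^ t * (20 / 21) ^ s < 1) :
    6 * (((n - s).factorial : ℕ) : ℝ) * (20 * n / 21) ^ s < ((n - t).factorial : ℕ) := by
  have hn0 : (0 : ℝ) < n := by exact_mod_cast hn
  have hs2 : 2 * s ^ 2 ≤ n := le_trans (by gcongr) hq
  have hsn : s ≤ n := by nlinarith
  have h1 : (n : ℝ) ^ s ≤ 2 * (n.descFactorial s : ℕ) := by
    have ha : (n - s) ^ s ≤ n.descFactorial s :=
      le_trans (Nat.pow_le_pow_left (by omega) s) (Nat.pow_sub_le_descFactorial n s)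
    have hb : ((n : ℝ) - s) ^ s ≤ (n.descFactorial s : ℕ) := by
      rw [← Nat.cast_sub hsn]; exact_mod_cast ha
    have hc : 1 + (s : ℝ) * (-(s / n)) ≤ (1 + (-((s : ℝ) / n))) ^ s := by
      apply one_add_mul_le_pow
      have : (s : ℝ) / n ≤ 1 := by
        rw [div_le_one hn0]; exact_mod_cast hsn
      linarith
    have hd : (s : ℝ) * (s / n) ≤ 1 / 2 := by
      rw [← mul_div_assoc, div_le_iff₀ hn0]
      have : 2 * (s : ℝ) ^ 2 ≤ n := by exact_mod_cast hs2
      nlinarith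
    have he : ((n : ℝ) - s) ^ s = n ^ s * (1 + (-((s : ℝ) / n))) ^ s := by
      rw [← mul_pow]; congr 1; field_simp; ring
    have hf : (n : ℝ) ^ s * (1 / 2) ≤ (n : ℝ) ^ s * (1 + (-((s : ℝ) / n))) ^ s := by
      gcongr; linarith
    linarith
  have h2 : (((n - s).factorial : ℕ) : ℝ) * (n.descFactorial s : ℕ) = (n.factorial : ℕ) := by
    exact_mod_cast Nat.factorial_mul_descFactorial hsn
  have h3 : ((n.factorial : ℕ) : ℝ) ≤ n ^ t * ((n - t).factorial : ℕ) := by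
    have := Nat.factorial_mul_descFactorial ht
    have h4 := Nat.descFactorial_le_pow n t
    have : n.factorial ≤ n ^ t * (n - t).factorial := by
      rw [← this, mul_comm]; gcongr
    exact_mod_cast this
  have hpos : (0 : ℝ) < ((n - t).factorial : ℕ) := by exact_mod_cast Nat.factorial_pos _
  calc 6 * (((n - s).factorial : ℕ) : ℝ) * (20 * n / 21) ^ s
      = 6 * (((n - s).factorial : ℕ) : ℝ) * (20 / 21) ^ s * n ^ s := by
        rw [show (20 * (n : ℝ) / 21) = 20 / 21 * n by ring, mul_pow]; ring
    _ ≤ 6 * (((n - s).factorial : ℕ) : ℝ) * (20 / 21) ^ s * (2 * (n.descFactorial s : ℕ)) := by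
        gcongr
    _ = 12 * (20 / 21) ^ s * ((n.factorial : ℕ) : ℝ) := by rw [← h2]; ring
    _ ≤ 12 * (20 / 21) ^ s * (n ^ t * ((n - t).factorial : ℕ)) := by gcongr
    _ = (12 * (n : ℝ) ^ t * (20 / 21) ^ s) * ((n - t).factorial : ℕ) := by ring
    _ < 1 * ((n - t).factorial : ℕ) := by gcongr
    _ = _ := one_mul _

theorem eventually_param (t : ℕ) (ht : 1 ≤ t) : ∀ᶠ n : ℕ in atTop, ∃ q : ℕ,
    100 * q ≤ n ∧ 6 * q ^ (t + 1) ≤ n - t ∧ ∀ s, s ≤ q → q < s + 3 →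
      6 * (((n - s).factorial : ℕ) : ℝ) * (20 * n / 21) ^ s < ((n - t).factorial : ℕ) := by
  have hl : 0 < Real.log (21 / 20) := Real.log_pos (by norm_num)
  set C : ℝ := (t + 1) / Real.log (21 / 20) with hC
  have hC0 : 0 < C := by rw [hC]; positivity
  set D : ℝ := 200 * (C + 1) ^ (t + 1) with hD
  have hD0 : 0 < D := by rw [hD]; positivity
  have h1 := (Real.isLittleO_pow_log_id_atTop (n := t + 1)).bound (show 0 < D⁻¹ by positivity)
  have h1' := tendsto_natCast_atTop_atTop (R := ℝ) |>.eventually h1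
  have h2' := (Real.tendsto_log_atTop.comp (tendsto_natCast_atTop_atTop (R := ℝ))).eventually
    (eventually_ge_atTop 3)
  filter_upwards [h1', h2', eventually_ge_atTop (2 * t + 13)] with n hn1 hn2 hn3
  simp only [Function.comp] at hn2
  have hn0 : (0 : ℝ) < n := by
    have : 0 < n := by omega
    exact_mod_cast this
  set L := Real.log n with hL
  refine ⟨⌈C * L⌉₊ + 2, ?_⟩
  set q := ⌈C * L⌉₊ + 2 with hq
  have hq1 : (q : ℝ) ≤ (C + 1) * L := by
    have := (Nat.ceil_lt_add_one (show 0 ≤ C * L by positivity)).le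
    rw [hq]; push_cast; linarith
  have hq2 : 200 * q ^ (t + 1) ≤ n := by
    have : 200 * (q : ℝ) ^ (t + 1) ≤ n := by
      rw [Real.norm_of_nonneg (by positivity), id, Real.norm_of_nonneg hn0.le,
        inv_mul_eq_div, le_div_iff₀ hD0] at hn1
      calc 200 * (q : ℝ) ^ (t + 1) ≤ 200 * ((C + 1) * L) ^ (t + 1) := by gcongr
        _ = L ^ (t + 1) * D := by rw [hD, mul_pow]; ring
        _ ≤ n := hn1
    exact_mod_cast this
  have hq3 : 1 ≤ q := by omega
  have hq4 : q ≤ q ^ (t + 1) := Nat.le_self_pow (by omega) q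
  have hq5 : q ^ 2 ≤ q ^ (t + 1) := Nat.pow_le_pow_right hq3 (by omega)
  refine ⟨by omega, by omega, ?_⟩
  intro s hs hs3
  apply fac_bound hs (by omega) (by omega) (by omega)
  have hsC : C * L ≤ s := by
    have h3 := Nat.le_ceil (C * L)
    have h4 : ⌈C * L⌉₊ ≤ s := by omega
    have h5 : ((⌈C * L⌉₊ : ℕ) : ℝ) ≤ s := by exact_mod_cast h4
    linarith
  have hexp : ((20 : ℝ) / 21) ^ s ≤ ((n : ℝ) ^ (t + 1))⁻¹ := by
    have e1 : ((20 : ℝ) / 21) ^ s = Real.exp (-(Real.log (21 / 20) * s)) := by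
      rw [mul_comm, Real.exp_neg, Real.exp_nat_mul, Real.exp_log (by norm_num), ← inv_pow]
      norm_num
    have e2 : ((n : ℝ) ^ (t + 1))⁻¹ = Real.exp (-((t + 1 : ℕ) * L)) := by
      rw [Real.exp_neg, Real.exp_nat_mul, hL, Real.exp_log hn0]
    rw [e1, e2]
    apply Real.exp_le_exp.2
    have : Real.log (21 / 20) * (C * L) ≤ Real.log (21 / 20) * s := by gcongr
    have e3 : Real.log (21 / 20) * (C * L) = (t + 1 : ℕ) * L := by
      rw [hC]; push_cast; field_simp
    linarith
  have hn12 : (12 : ℝ) < n := by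
    have : 12 < n := by omega
    exact_mod_cast this
  calc 12 * (n : ℝ) ^ t * (20 / 21) ^ s ≤ 12 * (n : ℝ) ^ t * ((n : ℝ) ^ (t + 1))⁻¹ := by gcongr
    _ = 12 / n := by rw [pow_succ]; field_simp
    _ < 1 := by rw [div_lt_one hn0]; exact hn12

theorem eventually_fac (t c : ℕ) : ∀ᶠ n : ℕ in atTop, c * 16 ^ n ≤ (n - t).factorial := by
  have h := FloorSemiring.tendsto_pow_div_factorial_atTop (16 : ℝ)
  have h2 := h.eventually (gt_mem_nhds (show (0 : ℝ) < 1 / ((c + 1) * 16 ^ t) by positivity))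
  have h3 := (tendsto_sub_atTop_nat t).eventually h2
  filter_upwards [h3, eventually_ge_atTop t] with n hn hnt
  have hf : (0 : ℝ) < ((n - t).factorial : ℕ) := by exact_mod_cast Nat.factorial_pos _
  rw [div_lt_div_iff₀ hf (by positivity)] at hn
  have e : (16 : ℝ) ^ n = 16 ^ (n - t) * 16 ^ t := by rw [← pow_add]; congr 1; omega
  have : (c : ℝ) * 16 ^ n ≤ ((n - t).factorial : ℕ) := by
    rw [e]
    have h8 : (0 : ℝ) < 16 ^ (n - t) * 16 ^ t := by positivity
    nlinarith
  exact_mod_cast this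

/-- The `t`-element partial permutations. -/
def pp (n t : ℕ) : Finset (Finset (Fin n × Fin n)) :=
  (powersetCard t univ).filter (fun S => (star S).Nonempty)

theorem mem_pp {n t : ℕ} {S : Finset (Fin n × Fin n)} :
    S ∈ pp n t ↔ S.card = t ∧ (star S).Nonempty := by
  simp [pp, mem_powersetCard]

theorem card_star_pp {n t : ℕ} {S : Finset (Fin n × Fin n)} (h : S ∈ pp n t) :
    (star S).card = (n - t).factorial := by
  obtain ⟨h1, σ, hσ⟩ := mem_pp.1 h
  rw [card_star (mem_star.1 hσ), h1]

theorem card_pp {n t : ℕ} (ht : t ≤ n) :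
    (pp n t).card = n.choose t ^ 2 * t.factorial := by
  have h := sum_choose_one (univ : Finset (Equiv.Perm (Fin n))) univ t
  simp only [inter_univ, card_gr, sum_const, smul_eq_mul, Finset.card_univ, Fintype.card_perm,
    Fintype.card_fin] at h
  have h2 : ∑ A ∈ powersetCard t (univ : Finset (Fin n × Fin n)),
      deg (univ : Finset (Equiv.Perm (Fin n))) A = (pp n t).card * (n - t).factorial := by
    rw [← smul_eq_mul, ← Finset.sum_const, pp, Finset.sum_filter]
    apply Finset.sum_congr rfl
    intro A hA
    split_ifs with hne
    · exact card_star_pp (mem_filter.2 ⟨hA, hne⟩)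
    · rw [Finset.not_nonempty_iff_eq_empty] at hne
      change (star A).card = 0
      rw [hne]; simp
  rw [h2, ← Nat.choose_mul_factorial_mul_factorial ht] at h
  have h3 : (pp n t).card * (n - t).factorial =
      (n.choose t ^ 2 * t.factorial) * (n - t).factorial := by rw [← h]; ring
  exact Nat.eq_of_mul_eq_mul_right (Nat.factorial_pos _) h3

theorem trivial_iff {n t : ℕ} (ht : t ≤ n) (F : Finset (Equiv.Perm (Fin n))) :
    IsTrivial t F ↔ ∃ S ∈ pp n t, F ⊆ star S := by
  classical
  constructor
  · rintro ⟨I, hI, x, hx⟩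
    by_cases hF : F.Nonempty
    · obtain ⟨σ, hσ⟩ := hF
      have hsub : ∀ π ∈ F, π ∈ star (I.image (fun i => (i, x i))) := by
        intro π hπ
        rw [mem_star]
        intro e he
        obtain ⟨i, hi, rfl⟩ := mem_image.1 he
        exact mem_gr.2 (hx π hπ i hi)
      refine ⟨I.image (fun i => (i, x i)), mem_pp.2 ⟨?_, ⟨σ, hsub σ hσ⟩⟩, hsub⟩
      rw [Finset.card_image_of_injective, hI]
      intro a b hab
      exact congrArg Prod.fst hab
    · rw [Finset.not_nonempty_iff_eq_empty] at hF
      have : (pp n t).Nonempty := by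
        rw [← Finset.card_pos, card_pp ht]
        have := Nat.choose_pos ht
        have := Nat.factorial_pos t
        positivity
      obtain ⟨S, hS⟩ := this
      exact ⟨S, hS, by simp [hF]⟩
  · rintro ⟨S, hS, hF⟩
    obtain ⟨h1, σ, hσ⟩ := mem_pp.1 hS
    rw [mem_star] at hσ
    refine ⟨S.image Prod.fst, (card_fst hσ).trans h1, σ, ?_⟩
    intro π hπ
    exact (mem_star_iff hσ).1 (hF hπ)

theorem trivial_int {n t : ℕ} (ht : t ≤ n) {F : Finset (Equiv.Perm (Fin n))}
    (h : IsTrivial t F) : IsTIntersecting t F := by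
  obtain ⟨S, hS, hF⟩ := (trivial_iff ht F).1 h
  intro σ hσ π hπ
  rw [← card_gr_inter, ← (mem_pp.1 hS).1]
  exact Finset.card_le_card (Finset.subset_inter (mem_star.1 (hF hσ)) (mem_star.1 (hF hπ)))

open Classical in
theorem card_trivial_le {n t : ℕ} (ht : t ≤ n) :
    ((univ : Finset (Finset (Equiv.Perm (Fin n)))).filter (IsTrivial t)).card ≤
      (pp n t).card * 2 ^ (n - t).factorial := by
  have : (univ : Finset (Finset (Equiv.Perm (Fin n)))).filter (IsTrivial t) ⊆
      (pp n t).biUnion (fun S => (star S).powerset) := by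
    intro F hF
    obtain ⟨S, hS, h⟩ := (trivial_iff ht F).1 (mem_filter.1 hF).2
    exact mem_biUnion.2 ⟨S, hS, mem_powerset.2 h⟩
  refine (Finset.card_le_card this).trans (Finset.card_biUnion_le_card_mul _ _ _ ?_)
  intro S hS
  rw [Finset.card_powerset, card_star_pp hS]

open Classical in
theorem le_card_trivial {n t : ℕ} (ht : t ≤ n) :
    (pp n t).card * 2 ^ (n - t).factorial ≤
    ((univ : Finset (Finset (Equiv.Perm (Fin n)))).filter (IsTrivial t)).card +
      (pp n t).card * ((pp n t).card * 2 ^ (n - (t + 1)).factorial) := by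
  let A : Finset (Fin n × Fin n) → Finset (Finset (Equiv.Perm (Fin n))) := fun S =>
    (star S).powerset.filter (fun F => ∀ S' ∈ pp n t, S' ≠ S → ¬ F ⊆ star S')
  have hdis : ((pp n t : Finset _) : Set (Finset (Fin n × Fin n))).PairwiseDisjoint A := by
    intro S hS S' hS' hne
    rw [Function.onFun, Finset.disjoint_left]
    intro F h1 h2
    exact (mem_filter.1 h1).2 S' hS' hne.symm (mem_powerset.1 (mem_filter.1 h2).1)
  have h1 : ∑ S ∈ pp n t, (A S).card ≤
      ((univ : Finset (Finset (Equiv.Perm (Fin n)))).filter (IsTrivial t)).card := by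
    rw [← Finset.card_biUnion hdis]
    apply Finset.card_le_card
    intro F hF
    obtain ⟨S, hS, h⟩ := mem_biUnion.1 hF
    exact mem_filter.2 ⟨mem_univ _, (trivial_iff ht F).2
      ⟨S, hS, mem_powerset.1 (mem_filter.1 h).1⟩⟩
  have h2 : ∀ S ∈ pp n t, 2 ^ (n - t).factorial ≤
      (A S).card + (pp n t).card * 2 ^ (n - (t + 1)).factorial := by
    intro S hS
    have hcov : (star S).powerset ⊆ A S ∪ (pp n t).biUnion
        (fun S' => if S' = S then ∅ else (star (S ∪ S')).powerset) := by
      intro F hF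
      by_cases h : ∀ S' ∈ pp n t, S' ≠ S → ¬ F ⊆ star S'
      · exact mem_union_left _ (mem_filter.2 ⟨hF, h⟩)
      · push Not at h
        obtain ⟨S', hS', hne, hsub⟩ := h
        apply mem_union_right
        refine mem_biUnion.2 ⟨S', hS', ?_⟩
        rw [if_neg hne, mem_powerset]
        intro σ hσ
        rw [mem_star]
        exact Finset.union_subset (mem_star.1 (mem_powerset.1 hF hσ)) (mem_star.1 (hsub hσ))
    rw [← card_star_pp hS, ← Finset.card_powerset]
    refine (Finset.card_le_card hcov).trans ((Finset.card_union_le _ _).trans ?_)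
    gcongr
    apply Finset.card_biUnion_le_card_mul
    intro S' hS'
    split_ifs with hne
    · simp
    · rw [Finset.card_powerset]
      apply Nat.pow_le_pow_right (by norm_num)
      refine (card_star_le _).trans (Nat.factorial_le ?_)
      have hlt : S.card < (S ∪ S').card := by
        apply Finset.card_lt_card
        refine Finset.ssubset_iff_subset_ne.2 ⟨Finset.subset_union_left, ?_⟩
        intro he
        apply hne
        apply Finset.eq_of_subset_of_card_le
        · rw [he]; exact Finset.subset_union_right
        · rw [(mem_pp.1 hS).1, (mem_pp.1 hS').1]
      have := (mem_pp.1 hS).1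
      omega
  calc (pp n t).card * 2 ^ (n - t).factorial = ∑ S ∈ pp n t, 2 ^ (n - t).factorial := by simp
    _ ≤ ∑ S ∈ pp n t, ((A S).card + (pp n t).card * 2 ^ (n - (t + 1)).factorial) :=
        Finset.sum_le_sum h2
    _ = ∑ S ∈ pp n t, (A S).card +
        (pp n t).card * ((pp n t).card * 2 ^ (n - (t + 1)).factorial) := by
        rw [Finset.sum_add_distrib, Finset.sum_const, smul_eq_mul]
    _ ≤ _ := by gcongr

end TI

namespace TI
open Finset Filter

open Classical in
theorem eventually_nontrivial (t : ℕ) (ht : 1 ≤ t) : ∀ᶠ n : ℕ in atTop,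
    ((univ : Finset (Finset (Equiv.Perm (Fin n)))).filter
      (fun F => IsTIntersecting t F ∧ ¬ IsTrivial t F)).card * 2 ^ n ≤
      2 ^ (n - t).factorial := by
  filter_upwards [eventually_param t ht, eventually_fac t 12, eventually_ge_atTop (t + 100)]
    with n ⟨q, hq1, hq2, hb⟩ hf hn
  have hW := count_bounded (n := n) (t := t) (K := 5 * (n - t).factorial / 6) (by omega)
    ((univ : Finset (Finset (Equiv.Perm (Fin n)))).filter
      (fun F => IsTIntersecting t F ∧ ¬ IsTrivial t F))
    (fun F hF => (mem_filter.1 hF).2.1)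
    (by
      intro F hF M hFM hM
      have hMt : ¬ IsTrivial t M := by
        rintro ⟨I, hI, x, hx⟩
        exact (mem_filter.1 hF).2.2 ⟨I, hI, x, fun σ hσ => hx σ (hFM hσ)⟩
      have := nontrivial_bound (by omega) hq1 (by omega) hq2 hb M hM hMt
      omega)
  have h1 : n.factorial + 1 ≤ 2 ^ (n * n) := by
    have h2 : n.factorial ≤ n ^ n := Nat.factorial_le_pow n
    have h3 : n ^ n < (2 ^ n) ^ n := Nat.pow_lt_pow_left Nat.lt_two_pow_self (by omega)
    rw [← pow_mul] at h3
    omega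
  have h4 : n * n * 4 ^ n ≤ 16 ^ n := by
    have h5 : n ≤ 2 ^ n := Nat.lt_two_pow_self.le
    calc n * n * 4 ^ n ≤ 2 ^ n * 2 ^ n * 4 ^ n := by gcongr
      _ = 16 ^ n := by rw [← mul_pow, ← mul_pow]; norm_num
  have h6 : n ≤ 16 ^ n := (Nat.lt_pow_self (by norm_num)).le
  refine (Nat.mul_le_mul_right _ hW).trans ?_
  calc (n.factorial + 1) ^ 4 ^ n * 2 ^ (5 * (n - t).factorial / 6) * 2 ^ n
      ≤ (2 ^ (n * n)) ^ 4 ^ n * 2 ^ (5 * (n - t).factorial / 6) * 2 ^ n := by gcongr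
    _ = 2 ^ (n * n * 4 ^ n + 5 * (n - t).factorial / 6 + n) := by
        rw [← pow_mul, ← pow_add, ← pow_add]
    _ ≤ _ := by
        apply Nat.pow_le_pow_right (by norm_num)
        omega

theorem eventually_overlap (t : ℕ) : ∀ᶠ n : ℕ in atTop,
    (pp n t).card * 2 ^ (n - (t + 1)).factorial * 2 ^ n ≤ 2 ^ (n - t).factorial := by
  filter_upwards [eventually_fac t (2 * (t + 2)), eventually_ge_atTop (t + 2)] with n hf hn
  have hN : (pp n t).card ≤ 2 ^ (n * (t + 1)) := by
    rw [card_pp (by omega)]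
    calc n.choose t ^ 2 * t.factorial = n.choose t * (t.factorial * n.choose t) := by ring
      _ = n.choose t * n.descFactorial t := by rw [Nat.descFactorial_eq_factorial_mul_choose]
      _ ≤ 2 ^ n * n ^ t := by
          gcongr
          · exact Nat.choose_le_two_pow n t
          · exact Nat.descFactorial_le_pow n t
      _ ≤ 2 ^ n * (2 ^ n) ^ t := by
          gcongr
          exact Nat.lt_two_pow_self.le
      _ = _ := by rw [← pow_mul, ← pow_add]; congr 1; ring
  have hfac : (n - t).factorial = (n - t) * (n - (t + 1)).factorial := by
    have : n - t = (n - (t + 1)) + 1 := by omega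
    rw [this, Nat.factorial_succ]
  have h2 : 2 * (n - (t + 1)).factorial ≤ (n - t).factorial := by
    rw [hfac]; gcongr; omega
  have h3 : 2 * (n * (t + 1) + n) ≤ (n - t).factorial := by
    refine le_trans ?_ hf
    calc 2 * (n * (t + 1) + n) = 2 * (t + 2) * n := by ring
      _ ≤ _ := by gcongr; exact (Nat.lt_pow_self (by norm_num)).le
  calc (pp n t).card * 2 ^ (n - (t + 1)).factorial * 2 ^ n
      ≤ 2 ^ (n * (t + 1)) * 2 ^ (n - (t + 1)).factorial * 2 ^ n := by gcongr
    _ = 2 ^ (n * (t + 1) + (n - (t + 1)).factorial + n) := by rw [← pow_add, ← pow_add]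
    _ ≤ _ := by
        apply Nat.pow_le_pow_right (by norm_num)
        omega

theorem eventually_main (t : ℕ) (ht : 1 ≤ t) : ∀ᶠ n : ℕ in atTop,
    ∃ V W : ℝ, ∃ B : ℝ, 0 < B ∧ 0 ≤ W ∧
      (Nat.card {F : Finset (Equiv.Perm (Fin n)) //
            IsTIntersecting t F ∧ IsTrivial t F} : ℝ) = V ∧
      (Nat.card {F : Finset (Equiv.Perm (Fin n)) // IsTIntersecting t F} : ℝ) = V + W ∧
      ((n.choose t : ℝ) ^ 2 * (t.factorial : ℝ) * (2 : ℝ) ^ ((n - t).factorial)) = B ∧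
      V ≤ B ∧ B * (1 - (1 / 2) ^ n) ≤ V ∧ W ≤ B * (1 / 2) ^ n := by
  classical
  filter_upwards [eventually_nontrivial t ht, eventually_overlap t, eventually_ge_atTop t]
    with n hW hO hn
  set f := (n - t).factorial with hf
  set Vs := (univ : Finset (Finset (Equiv.Perm (Fin n)))).filter (IsTrivial t) with hVs
  set Ws := (univ : Finset (Finset (Equiv.Perm (Fin n)))).filter
      (fun F => IsTIntersecting t F ∧ ¬ IsTrivial t F) with hWs
  have hN1 : 1 ≤ (pp n t).card := by
    rw [card_pp hn]
    have := Nat.choose_pos hn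
    have := Nat.factorial_pos t
    have : 0 < n.choose t ^ 2 * t.factorial := by positivity
    omega
  have hN1' : (1 : ℝ) ≤ (pp n t).card := by exact_mod_cast hN1
  have hVu : (Vs.card : ℝ) ≤ (pp n t).card * 2 ^ f := by
    exact_mod_cast card_trivial_le (n := n) hn
  have hVl : ((pp n t).card : ℝ) * 2 ^ f ≤ Vs.card +
      (pp n t).card * ((pp n t).card * 2 ^ (n - (t + 1)).factorial) := by
    exact_mod_cast le_card_trivial (n := n) hn
  have hW' : (Ws.card : ℝ) * 2 ^ n ≤ 2 ^ f := by exact_mod_cast hW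
  have hO' : ((pp n t).card : ℝ) * 2 ^ (n - (t + 1)).factorial * 2 ^ n ≤ 2 ^ f := by
    exact_mod_cast hO
  have h2n : (2 : ℝ) ^ n * (1 / 2) ^ n = 1 := by rw [← mul_pow]; norm_num
  have hW2 : (Ws.card : ℝ) ≤ 2 ^ f * (1 / 2) ^ n := by
    calc (Ws.card : ℝ) = Ws.card * 2 ^ n * (1 / 2) ^ n := by rw [mul_assoc, h2n, mul_one]
      _ ≤ _ := by gcongr
  have hO2 : ((pp n t).card : ℝ) * 2 ^ (n - (t + 1)).factorial ≤ 2 ^ f * (1 / 2) ^ n := by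
    calc ((pp n t).card : ℝ) * 2 ^ (n - (t + 1)).factorial
        = (pp n t).card * 2 ^ (n - (t + 1)).factorial * 2 ^ n * (1 / 2) ^ n := by
          rw [mul_assoc, h2n, mul_one]
      _ ≤ _ := by gcongr
  refine ⟨Vs.card, Ws.card, (pp n t).card * 2 ^ f, by positivity, by positivity, ?_, ?_, ?_,
    hVu, ?_, ?_⟩
  · rw [Nat.card_eq_fintype_card, Fintype.card_subtype]
    congr 2
    ext F
    simp only [hVs, mem_filter, mem_univ, true_and]
    exact ⟨fun h => h.2, fun h => ⟨trivial_int hn h, h⟩⟩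
  · rw [Nat.card_eq_fintype_card, Fintype.card_subtype, ← Nat.cast_add,
      ← Finset.card_union_of_disjoint]
    · congr 2
      ext F
      simp only [hVs, hWs, mem_filter, mem_univ, true_and, mem_union]
      constructor
      · intro h
        by_cases h2 : IsTrivial t F
        · exact Or.inl h2
        · exact Or.inr ⟨h, h2⟩
      · rintro (h | h)
        · exact trivial_int hn h
        · exact h.1
    · rw [Finset.disjoint_left]
      intro F h1 h2
      exact (mem_filter.1 h2).2.2 (mem_filter.1 h1).2
  · rw [card_pp hn]; push_cast; ring
  · have : ((pp n t).card : ℝ) * ((pp n t).card * 2 ^ (n - (t + 1)).factorial) ≤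
        (pp n t).card * (2 ^ f * (1 / 2) ^ n) := by gcongr
    nlinarith
  · refine hW2.trans ?_
    have : (0 : ℝ) ≤ 2 ^ f * (1 / 2) ^ n := by positivity
    nlinarith

end TI

theorem typical_structure_of_t_intersecting_permutation_families
    (t : ℕ) (ht : 1 ≤ t) :
    Filter.Tendsto (fun n : ℕ =>
        (Nat.card {F : Finset (Equiv.Perm (Fin n)) //
            IsTIntersecting t F ∧ IsTrivial t F} : ℝ) /
        (Nat.card {F : Finset (Equiv.Perm (Fin n)) // IsTIntersecting t F} : ℝ))
      Filter.atTop (nhds 1)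
    ∧
    Filter.Tendsto (fun n : ℕ =>
        (Nat.card {F : Finset (Equiv.Perm (Fin n)) // IsTIntersecting t F} : ℝ) /
        ((n.choose t : ℝ) ^ 2 * (t.factorial : ℝ) * (2 : ℝ) ^ ((n - t).factorial)))
      Filter.atTop (nhds 1) := by
  
  classical
  have hpow : Filter.Tendsto (fun n : ℕ => (1 / 2 : ℝ) ^ n) Filter.atTop (nhds 0) :=
    tendsto_pow_atTop_nhds_zero_of_lt_one (by norm_num) (by norm_num)
  have hmain := TI.eventually_main t ht
  have hlow : Filter.Tendsto (fun n : ℕ => 1 - (1 / 2 : ℝ) ^ n) Filter.atTop (nhds 1) := by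
    simpa using hpow.const_sub 1
  have hupp : Filter.Tendsto (fun n : ℕ => 1 + (1 / 2 : ℝ) ^ n) Filter.atTop (nhds 1) := by
    simpa using hpow.const_add 1
  have hV : Filter.Tendsto (fun n : ℕ =>
        (Nat.card {F : Finset (Equiv.Perm (Fin n)) //
            IsTIntersecting t F ∧ IsTrivial t F} : ℝ) /
        ((n.choose t : ℝ) ^ 2 * (t.factorial : ℝ) * (2 : ℝ) ^ ((n - t).factorial)))
      Filter.atTop (nhds 1) := by
    refine tendsto_of_tendsto_of_tendsto_of_le_of_le' hlow hupp ?_ ?_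
    · filter_upwards [hmain] with n ⟨V, W, B, hB, hW0, e1, e2, e3, h1, h2, h3⟩
      rw [e1, e3, le_div_iff₀ hB]; linarith
    · filter_upwards [hmain] with n ⟨V, W, B, hB, hW0, e1, e2, e3, h1, h2, h3⟩
      rw [e1, e3, div_le_iff₀ hB]
      have : 0 ≤ B * (1 / 2 : ℝ) ^ n := by positivity
      linarith
  have hT : Filter.Tendsto (fun n : ℕ =>
        (Nat.card {F : Finset (Equiv.Perm (Fin n)) // IsTIntersecting t F} : ℝ) /
        ((n.choose t : ℝ) ^ 2 * (t.factorial : ℝ) * (2 : ℝ) ^ ((n - t).factorial)))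
      Filter.atTop (nhds 1) := by
    refine tendsto_of_tendsto_of_tendsto_of_le_of_le' hlow hupp ?_ ?_
    · filter_upwards [hmain] with n ⟨V, W, B, hB, hW0, e1, e2, e3, h1, h2, h3⟩
      rw [e2, e3, le_div_iff₀ hB]; linarith
    · filter_upwards [hmain] with n ⟨V, W, B, hB, hW0, e1, e2, e3, h1, h2, h3⟩
      rw [e2, e3, div_le_iff₀ hB]; linarith
  refine ⟨?_, hT⟩
  have hdiv := hV.div hT one_ne_zero
  rw [div_one] at hdiv
  refine hdiv.congr' ?_
  filter_upwards [hmain] with n ⟨V, W, B, hB, hW0, e1, e2, e3, h1, h2, h3⟩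
  simp only [Pi.div_apply]
  rw [e3]
  exact div_div_div_cancel_right₀ hB.ne' _ _
end

section
/- For every fixed integer t ≥ 1 and every ε > 0 there exists n₀ such that for all n ≥ n₀ and every integer m with n·2^{2n−2t+2}·log n ≤ m ≤ (n−t)!, the number of non-trivial t-intersecting families of exactly m permutations in S_n is at most ε times the total number of t-intersecting families of exactly m permutations in S_n. -/
lemma centralBinom_sq_bound (n : ℕ) : n.centralBinom ^ 2 * (2 * n + 1) ≤ 16 ^ n := by
  induction n with
  | zero => simp
  | succ n ih =>
    have h := Nat.succ_mul_centralBinom_succ n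
    have h1 : (n + 1) ^ 2 * ((n + 1).centralBinom ^ 2 * (2 * (n + 1) + 1))
        ≤ (n + 1) ^ 2 * 16 ^ (n + 1) := by
      calc (n + 1) ^ 2 * ((n + 1).centralBinom ^ 2 * (2 * (n + 1) + 1))
          = ((n + 1) * (n + 1).centralBinom) ^ 2 * (2 * n + 3) := by ring
        _ = (2 * (2 * n + 1) * n.centralBinom) ^ 2 * (2 * n + 3) := by rw [h]
        _ = (n.centralBinom ^ 2 * (2 * n + 1)) * (4 * (2 * n + 1) * (2 * n + 3)) := by ring
        _ ≤ 16 ^ n * (16 * (n + 1) ^ 2) := by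
            apply Nat.mul_le_mul ih
            nlinarith
        _ = (n + 1) ^ 2 * 16 ^ (n + 1) := by ring
    exact Nat.le_of_mul_le_mul_left h1 (by positivity)

lemma centralBinom_mono' {a b : ℕ} (h : a ≤ b) : a.centralBinom ≤ b.centralBinom := by
  refine monotone_nat_of_le_succ (f := Nat.centralBinom) (fun n => ?_) h
  have h := Nat.succ_mul_centralBinom_succ n
  have : (n + 1) * n.centralBinom ≤ (n + 1) * (n + 1).centralBinom := by
    rw [h]; apply Nat.mul_le_mul_right; omega
  exact Nat.le_of_mul_le_mul_left this (by omega)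

lemma exists_initial {α β : Type*} [DecidableEq α] [LinearOrder β] (x : α → β)
    (hx : Function.Injective x) (C : Finset α) (k : ℕ) (hk : k ≤ C.card) :
    ∃ T ⊆ C, T.card = k ∧ ∀ a ∈ T, ∀ b ∈ C \ T, x a < x b := by
  induction k with
  | zero => exact ⟨∅, by simp⟩
  | succ k ih =>
    obtain ⟨T, hTC, hT, hlt⟩ := ih (by omega)
    have hne : (C \ T).Nonempty := by
      rw [← Finset.card_pos, Finset.card_sdiff_of_subset hTC]; omega
    obtain ⟨b, hb, hmin⟩ := Finset.exists_min_image (C \ T) x hne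
    have hb' := Finset.mem_sdiff.1 hb
    refine ⟨insert b T, ?_, ?_, ?_⟩
    · intro z hz
      rcases Finset.mem_insert.1 hz with rfl | hz
      · exact hb'.1
      · exact hTC hz
    · rw [Finset.card_insert_of_notMem hb'.2, hT]
    · intro a ha c hc
      simp only [Finset.mem_sdiff, Finset.mem_insert, not_or] at hc
      have hc' : c ∈ C \ T := Finset.mem_sdiff.2 ⟨hc.1, hc.2.2⟩
      rcases Finset.mem_insert.1 ha with rfl | ha
      · exact lt_of_le_of_ne (hmin c hc') (fun h => hc.2.1 (hx h).symm)
      · exact hlt a ha c hc'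

def ordBefore {α : Type*} [Fintype α] [DecidableEq α] (P Q : Finset α) :
    Finset (α ≃ Fin (Fintype.card α)) :=
  Finset.univ.filter (fun x => ∀ a ∈ P, ∀ b ∈ Q, x a < x b)

lemma exists_perm_pair {α : Type*} [Fintype α] [DecidableEq α] (T U P Q : Finset α)
    (hTU : Disjoint T U) (hPQ : Disjoint P Q) (h1 : T.card = P.card) (h2 : U.card = Q.card) :
    ∃ π : Equiv.Perm α, (∀ a ∈ P, π.symm a ∈ T) ∧ (∀ a ∈ Q, π.symm a ∈ U) := by
  let e1 := Finset.equivOfCardEq h1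
  let e2 := Finset.equivOfCardEq h2
  let f : α → α := fun a => if h : a ∈ T then e1 ⟨a, h⟩ else if h : a ∈ U then e2 ⟨a, h⟩ else a
  have f1 : ∀ a (h : a ∈ T), f a = e1 ⟨a, h⟩ := fun a h => by simp [f, h]
  have f2 : ∀ a (h : a ∈ U), f a = e2 ⟨a, h⟩ := fun a h => by
    have : a ∉ T := fun h' => Finset.disjoint_left.1 hTU h' h
    simp [f, h, this]
  have hinj : Set.InjOn f ((T ∪ U : Finset α) : Set α) := by
    intro a ha b hb hab
    simp only [Finset.coe_union, Set.mem_union, Finset.mem_coe] at ha hb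
    rcases ha with ha | ha <;> rcases hb with hb | hb
    · rw [f1 a ha, f1 b hb] at hab
      simpa using e1.injective (Subtype.ext hab)
    · rw [f1 a ha, f2 b hb] at hab
      exact absurd (hab ▸ (e2 ⟨b, hb⟩).2 : ((e1 ⟨a, ha⟩ : P) : α) ∈ Q)
        (Finset.disjoint_left.1 hPQ (e1 ⟨a, ha⟩).2)
    · rw [f2 a ha, f1 b hb] at hab
      exact absurd (hab ▸ (e2 ⟨a, ha⟩).2 : ((e1 ⟨b, hb⟩ : P) : α) ∈ Q)
        (Finset.disjoint_left.1 hPQ (e1 ⟨b, hb⟩).2)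
    · rw [f2 a ha, f2 b hb] at hab
      simpa using e2.injective (Subtype.ext hab)
  obtain ⟨g, hg⟩ := Finset.exists_equiv_extend_of_card_eq (t := (Finset.univ : Finset α))
    (by simp) (Finset.subset_univ _) hinj
  let g' : Equiv.Perm α := g.trans (Equiv.subtypeUnivEquiv (fun x => Finset.mem_univ x))
  have hg' : ∀ a ∈ T ∪ U, g' a = f a := fun a ha => hg a ha
  refine ⟨g', fun a ha => ?_, fun a ha => ?_⟩
  · have : g' (e1.symm ⟨a, ha⟩) = a := by
      rw [hg' _ (Finset.mem_union_left _ (e1.symm ⟨a, ha⟩).2), f1 _ (e1.symm ⟨a, ha⟩).2]; simp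
    rw [← this]; simp
  · have : g' (e2.symm ⟨a, ha⟩) = a := by
      rw [hg' _ (Finset.mem_union_right _ (e2.symm ⟨a, ha⟩).2), f2 _ (e2.symm ⟨a, ha⟩).2]; simp
    rw [← this]; simp

lemma ord_count {α : Type*} [Fintype α] [DecidableEq α] (P Q : Finset α) (k : ℕ)
    (hPQ : Disjoint P Q) (hP : P.card = k) (hQ : Q.card = k) :
    Fintype.card (α ≃ Fin (Fintype.card α)) ≤ k.centralBinom * (ordBefore P Q).card := by
  have hC : (P ∪ Q).card = 2 * k := by rw [Finset.card_union_of_disjoint hPQ]; omega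
  have hsub : (Finset.univ : Finset (α ≃ Fin (Fintype.card α))) ⊆
      ((P ∪ Q).powersetCard k).biUnion (fun T => ordBefore T ((P ∪ Q) \ T)) := by
    intro x _
    obtain ⟨T, hT, hTk, hlt⟩ := exists_initial x x.injective (P ∪ Q) k (by omega)
    rw [Finset.mem_biUnion]
    exact ⟨T, Finset.mem_powersetCard.2 ⟨hT, hTk⟩, by simpa [ordBefore] using hlt⟩
  have h := Finset.card_le_card hsub
  rw [Finset.card_univ] at h
  refine h.trans ?_
  have : k.centralBinom = ((P ∪ Q).powersetCard k).card := by
    rw [Finset.card_powersetCard, hC, Nat.centralBinom]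
  rw [this]
  apply Finset.card_biUnion_le_card_mul
  intro T hT
  obtain ⟨hT, hTk⟩ := Finset.mem_powersetCard.1 hT
  obtain ⟨π, h1, h2⟩ := exists_perm_pair T ((P ∪ Q) \ T) P Q Finset.disjoint_sdiff hPQ
    (by omega) (by rw [Finset.card_sdiff_of_subset hT]; omega)
  refine Finset.card_le_card_of_injOn (fun x => π.symm.trans x) ?_ ?_
  · intro x hx
    simp only [ordBefore, Finset.coe_filter, Finset.mem_univ, true_and, Set.mem_ofPred_eq] at hx ⊢
    intro a ha b hb
    exact hx _ (h1 a ha) _ (h2 b hb)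
  · intro x _ y _ hxy
    ext a
    have := congrArg (fun z : α ≃ Fin (Fintype.card α) => z (π a)) hxy
    simpa using congrArg Fin.val this

lemma bollobas_t {α ι : Type*} [Fintype α] [DecidableEq α] (s : Finset ι)
    (A B : ι → Finset α) (n t : ℕ) (htn : t ≤ n)
    (hA : ∀ i ∈ s, (A i).card = n) (hB : ∀ i ∈ s, (B i).card = n)
    (hd : ∀ i ∈ s, (A i ∩ B i).card < t)
    (ho : ∀ i ∈ s, ∀ j ∈ s, i ≠ j → t ≤ (A i ∩ B j).card) :
    s.card ≤ t * n.centralBinom := by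
  classical
  set Ω := α ≃ Fin (Fintype.card α)
  have hcard : ∀ i ∈ s, (A i \ B i).card = n - (A i ∩ B i).card ∧
      (B i \ A i).card = n - (A i ∩ B i).card := by
    intro i hi
    have h1 := Finset.card_sdiff_add_card_inter (A i) (B i)
    have h2 := Finset.card_sdiff_add_card_inter (B i) (A i)
    rw [hA i hi] at h1
    rw [hB i hi, Finset.inter_comm] at h2
    omega
  have key : ∀ x : Ω, (s.filter (fun i => x ∈ ordBefore (A i \ B i) (B i \ A i))).card ≤ t := by
    intro x
    set s' := s.filter (fun i => x ∈ ordBefore (A i \ B i) (B i \ A i))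
    have hp : ∀ i, ∃ p : ℕ, i ∈ s' → (∀ a ∈ A i \ B i, (x a : ℕ) ≤ p) ∧
        (∀ b ∈ B i \ A i, p < (x b : ℕ)) := by
      intro i
      by_cases hi : i ∈ s'
      · obtain ⟨his, hix⟩ := Finset.mem_filter.1 hi
        have hne : (A i \ B i).Nonempty := by
          rw [← Finset.card_pos, (hcard i his).1]; have := hd i his; omega
        obtain ⟨a, ha, hmax⟩ := Finset.exists_max_image (A i \ B i) x hne
        simp only [ordBefore, Finset.mem_filter, Finset.mem_univ, true_and] at hix
        exact ⟨x a, fun _ => ⟨hmax, fun b hb => hix a ha b hb⟩⟩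
      · exact ⟨0, fun h => absurd h hi⟩
    choose p hp using hp
    have hlt : ∀ i ∈ s', ∀ j ∈ s', i ≠ j → p i ≤ p j →
        ((A i ∩ B i).filter (fun e => (x e : ℕ) ≤ p i)).card <
          ((A j ∩ B j).filter (fun e => (x e : ℕ) ≤ p j)).card := by
      intro i hi j hj hij hpij
      have his := (Finset.mem_filter.1 hi).1
      have hjs := (Finset.mem_filter.1 hj).1
      have h1 := ho i his j hjs hij
      have h2 := hd i his
      have hsub : A i ∩ B j ⊆ ((A j ∩ B j).filter (fun e => (x e : ℕ) ≤ p i)) ∪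
          ((A i ∩ B i).filter (fun e => ¬ (x e : ℕ) ≤ p i)) := by
        intro e he
        obtain ⟨heA, heB⟩ := Finset.mem_inter.1 he
        simp only [Finset.mem_union, Finset.mem_filter, Finset.mem_inter]
        by_cases hx : (x e : ℕ) ≤ p i
        · left
          refine ⟨⟨?_, heB⟩, hx⟩
          by_contra hA'
          exact absurd ((hp j hj).2 e (Finset.mem_sdiff.2 ⟨heB, hA'⟩)) (not_lt.2 (hx.trans hpij))
        · right
          refine ⟨⟨heA, ?_⟩, hx⟩
          by_contra hB'
          exact hx ((hp i hi).1 e (Finset.mem_sdiff.2 ⟨heA, hB'⟩))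
      have h3 := (Finset.card_le_card hsub).trans (Finset.card_union_le _ _)
      have h4 := Finset.card_filter_add_card_filter_not (s := A i ∩ B i) (fun e => (x e : ℕ) ≤ p i)
      have h5 : ((A j ∩ B j).filter (fun e => (x e : ℕ) ≤ p i)).card ≤
          ((A j ∩ B j).filter (fun e => (x e : ℕ) ≤ p j)).card := by
        apply Finset.card_le_card
        intro e he
        simp only [Finset.mem_filter] at he ⊢
        exact ⟨he.1, he.2.trans hpij⟩
      omega
    rw [← Finset.card_range t]
    refine Finset.card_le_card_of_injOn
      (fun i => ((A i ∩ B i).filter (fun e => (x e : ℕ) ≤ p i)).card) ?_ ?_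
    · intro i hi
      have h2 := hd i (Finset.mem_filter.1 hi).1
      simp only [Finset.coe_range, Set.mem_Iio]
      exact (Finset.card_filter_le _ _).trans_lt h2
    · intro i hi j hj hij
      by_contra hne
      rcases le_total (p i) (p j) with h | h
      · exact absurd hij (hlt i hi j hj hne h).ne
      · exact absurd hij (hlt j hj i hi (Ne.symm hne) h).ne'
  have hΩ : 0 < Fintype.card Ω := Fintype.card_pos_iff.2 ⟨Fintype.equivFin α⟩
  have : s.card * Fintype.card Ω ≤ (t * n.centralBinom) * Fintype.card Ω := by
    calc s.card * Fintype.card Ω = ∑ i ∈ s, Fintype.card Ω := by simp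
      _ ≤ ∑ i ∈ s, n.centralBinom * (ordBefore (A i \ B i) (B i \ A i)).card := by
          apply Finset.sum_le_sum
          intro i hi
          refine (ord_count _ _ _ disjoint_sdiff_sdiff (hcard i hi).1 (hcard i hi).2).trans ?_
          exact Nat.mul_le_mul_right _ (centralBinom_mono' (Nat.sub_le _ _))
      _ = n.centralBinom * ∑ i ∈ s, (ordBefore (A i \ B i) (B i \ A i)).card := by
          rw [Finset.mul_sum]
      _ = n.centralBinom * ∑ x : Ω,
            (s.filter (fun i => x ∈ ordBefore (A i \ B i) (B i \ A i))).card := by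
          congr 1
          have := Finset.sum_card_bipartiteAbove_eq_sum_card_bipartiteBelow
            (s := s) (t := (Finset.univ : Finset Ω))
            (fun i x => x ∈ ordBefore (A i \ B i) (B i \ A i))
          simpa [Finset.bipartiteAbove, Finset.bipartiteBelow] using this
      _ ≤ n.centralBinom * ∑ x : Ω, t := by
          gcongr with x
          exact key x
      _ = _ := by simp; ring
  exact Nat.le_of_mul_le_mul_right this hΩ

/-- Inclusion-minimal elements of `{S \ W : S ∈ H}`. -/
def minFrag {α : Type*} [DecidableEq α] (H : Finset (Finset α)) (W : Finset α) :
    Finset (Finset α) :=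
  (H.image (fun S => S \ W)).filter (fun T => ∀ S ∈ H, S \ W ⊆ T → S \ W = T)

lemma exists_minFrag {α : Type*} [DecidableEq α] (H : Finset (Finset α)) (W S : Finset α)
    (hS : S ∈ H) : ∃ T ∈ minFrag H W, T ⊆ S := by
  obtain ⟨S', hS', hmin⟩ := Finset.exists_min_image (H.filter (fun S' => S' \ W ⊆ S \ W))
    (fun S' => (S' \ W).card) ⟨S, by simp [hS]⟩
  simp only [Finset.mem_filter] at hS' hmin
  refine ⟨S' \ W, ?_, hS'.2.trans Finset.sdiff_subset⟩
  simp only [minFrag, Finset.mem_filter, Finset.mem_image]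
  refine ⟨⟨S', hS'.1, rfl⟩, fun U hU hUS => ?_⟩
  exact Finset.eq_of_subset_of_card_le hUS (hmin U ⟨hU, hUS.trans hS'.2⟩)

/-- The colour class of `k`. -/
def colClass {α κ : Type*} [Fintype α] [DecidableEq κ] (c : α → κ) (k : κ) : Finset α :=
  Finset.univ.filter (fun a => c a = k)

lemma mem_colClass {α κ : Type*} [Fintype α] [DecidableEq κ] (c : α → κ) (k : κ) (a : α) :
    a ∈ colClass c k ↔ c a = k := by
  simp [colClass]

/-- The sequence of fragment families. -/
def fragSeq {α κ : Type*} [Fintype α] [DecidableEq α] [DecidableEq κ]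
    (H : Finset (Finset α)) (e : ℕ → κ) (R : ℕ) (c : α → κ) : ℕ → Finset (Finset α)
  | 0 => H
  | i + 1 => (minFrag (fragSeq H e R c i) (colClass c (e i))).filter
      (fun T => T.card < 2 ^ (R - (i + 1)))

/-- The large fragments removed at step `i`. -/
def bigFrag {α κ : Type*} [Fintype α] [DecidableEq α] [DecidableEq κ]
    (H : Finset (Finset α)) (e : ℕ → κ) (R : ℕ) (c : α → κ) (i : ℕ) : Finset (Finset α) :=
  (minFrag (fragSeq H e R c i) (colClass c (e i))).filter
      (fun T => ¬ T.card < 2 ^ (R - (i + 1)))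

section frag
set_option linter.unusedSectionVars false
variable {α κ : Type*} [Fintype α] [DecidableEq α] [Fintype κ] [DecidableEq κ]

lemma fragSeq_card (H : Finset (Finset α)) (e : ℕ → κ) (R : ℕ) (c : α → κ)
    (hH : ∀ S ∈ H, S.card < 2 ^ R) (i : ℕ) :
    ∀ S ∈ fragSeq H e R c i, S.card < 2 ^ (R - i) := by
  cases i with
  | zero => simpa [fragSeq] using hH
  | succ i =>
    intro S hS
    simp only [fragSeq, Finset.mem_filter] at hS
    exact hS.2

lemma minFrag_sub {H : Finset (Finset α)} {W T : Finset α} (hT : T ∈ minFrag H W) :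
    ∃ S ∈ H, S \ W = T := by
  simp only [minFrag, Finset.mem_filter, Finset.mem_image] at hT
  exact hT.1

lemma minFrag_min {H : Finset (Finset α)} {W T : Finset α} (hT : T ∈ minFrag H W) :
    ∀ S ∈ H, S \ W ⊆ T → S \ W = T := by
  simp only [minFrag, Finset.mem_filter, Finset.mem_image] at hT
  exact hT.2

lemma fragSeq_disj (H : Finset (Finset α)) (e : ℕ → κ) (R : ℕ) (c : α → κ) (i : ℕ) :
    ∀ T ∈ fragSeq H e R c i, ∀ a ∈ T, ∀ j < i, c a ≠ e j := by
  induction i with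
  | zero => simp
  | succ i ih =>
    intro T hT a ha j hj
    simp only [fragSeq, Finset.mem_filter] at hT
    obtain ⟨S, hS, rfl⟩ := minFrag_sub hT.1
    obtain ⟨h1, h2⟩ := Finset.mem_sdiff.1 ha
    rcases Nat.lt_succ_iff_lt_or_eq.1 hj with h | rfl
    · exact ih S hS a h1 j h
    · simpa [colClass] using h2

lemma fragSeq_origin (H : Finset (Finset α)) (e : ℕ → κ) (R : ℕ) (c : α → κ) (i : ℕ) :
    ∀ T ∈ fragSeq H e R c i, ∃ S ∈ H, ∀ a ∈ S, a ∈ T ∨ ∃ j < i, c a = e j := by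
  induction i with
  | zero => exact fun T hT => ⟨T, hT, fun a ha => Or.inl ha⟩
  | succ i ih =>
    intro T hT
    simp only [fragSeq, Finset.mem_filter] at hT
    obtain ⟨S, hS, rfl⟩ := minFrag_sub hT.1
    obtain ⟨S', hS', h⟩ := ih S hS
    refine ⟨S', hS', fun a ha => ?_⟩
    rcases h a ha with h | ⟨j, hj, hc⟩
    · by_cases hc : c a = e i
      · exact Or.inr ⟨i, by omega, hc⟩
      · exact Or.inl (Finset.mem_sdiff.2 ⟨h, by simpa [colClass] using hc⟩)
    · exact Or.inr ⟨j, by omega, hc⟩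

lemma fragSeq_cover (H : Finset (Finset α)) (e : ℕ → κ) (R : ℕ) (c : α → κ) (i : ℕ)
    (S : Finset α) (hS : S ∈ H) :
    (∃ T ∈ fragSeq H e R c i, T ⊆ S) ∨ ∃ j < i, ∃ T ∈ bigFrag H e R c j, T ⊆ S := by
  induction i with
  | zero => exact Or.inl ⟨S, hS, subset_rfl⟩
  | succ i ih =>
    rcases ih with ⟨T, hT, hTS⟩ | ⟨j, hj, h⟩
    · obtain ⟨U, hU, hUT⟩ := exists_minFrag _ (colClass c (e i)) T hT
      by_cases hc : U.card < 2 ^ (R - (i + 1))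
      · exact Or.inl ⟨U, Finset.mem_filter.2 ⟨hU, hc⟩, hUT.trans hTS⟩
      · exact Or.inr ⟨i, by omega, U, Finset.mem_filter.2 ⟨hU, hc⟩, hUT.trans hTS⟩
    · exact Or.inr ⟨j, by omega, h⟩

lemma fragSeq_congr (H : Finset (Finset α)) (e : ℕ → κ) (R : ℕ) (c c' : α → κ) (i : ℕ)
    (h : ∀ j < i, colClass c (e j) = colClass c' (e j)) :
    fragSeq H e R c i = fragSeq H e R c' i := by
  induction i with
  | zero => rfl
  | succ i ih =>
    simp only [fragSeq]
    rw [ih (fun j hj => h j (by omega)), h i (by omega)]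

/-- Recolour the set `T` with colour `k`. -/
def recol (T : Finset α) (k : κ) (c : α → κ) : α → κ := fun a => if a ∈ T then k else c a

lemma sum_recol_le (T : Finset α) (k : κ) (f : (α → κ) → ℝ) (hf : ∀ c, 0 ≤ f c) :
    ∑ c : α → κ, f (recol T k c) ≤ (Fintype.card κ : ℝ) ^ T.card * ∑ c : α → κ, f c := by
  classical
  rw [← Finset.sum_fiberwise_of_maps_to (s := (Finset.univ : Finset (α → κ)))
    (t := (Finset.univ : Finset (α → κ))) (g := recol T k) (fun _ _ => Finset.mem_univ _),
    Finset.mul_sum]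
  apply Finset.sum_le_sum
  intro c' _
  have : ∀ c ∈ Finset.univ.filter (fun c => recol T k c = c'), f (recol T k c) = f c' := by
    intro c hc
    rw [(Finset.mem_filter.1 hc).2]
  rw [Finset.sum_congr rfl this, Finset.sum_const, nsmul_eq_mul]
  apply mul_le_mul_of_nonneg_right _ (hf c')
  have h : (Finset.univ.filter (fun c : α → κ => recol T k c = c')).card ≤
      (Finset.univ : Finset (T → κ)).card := by
    refine Finset.card_le_card_of_injOn (fun c a => c a) (fun _ _ => by simp) ?_
    intro c hc d hd hcd
    simp only [Finset.coe_filter, Finset.mem_univ, true_and, Set.mem_ofPred_eq] at hc hd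
    funext a
    by_cases ha : a ∈ T
    · exact congrFun hcd ⟨a, ha⟩
    · have := congrFun (hc.trans hd.symm) a
      simpa [recol, ha] using this
  rw [Finset.card_univ, Fintype.card_fun, Fintype.card_coe] at h
  exact_mod_cast h

lemma bigFrag_cost (H : Finset (Finset α)) (e : ℕ → κ) (R : ℕ)
    (hH : ∀ S ∈ H, S.card < 2 ^ R) (p : ℝ) (hp : 0 ≤ p)
    (hKp : 4 * (Fintype.card κ : ℝ) * p ≤ 1) (i : ℕ) (hi : i < R)
    (he : ∀ j < i, e j ≠ e i) :
    ∑ c : α → κ, ∑ T ∈ bigFrag H e R c i, p ^ T.card ≤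
      Fintype.card (α → κ) * (4 * (Fintype.card κ : ℝ) * p) := by
  classical
  set K : ℝ := (Fintype.card κ : ℝ) with hK
  have hK0 : 0 ≤ K := by positivity
  set l := 2 ^ (R - (i + 1)) with hl
  have hl1 : 1 ≤ l := Nat.one_le_two_pow
  have hl2 : 2 ^ (R - i) = 2 * l := by
    rw [hl, ← pow_succ']; congr 1; omega
  -- choose a member contained in the colour class
  have hch : ∀ c : α → κ, ∃ S : Finset α, S.card ≤ 2 * l ∧
      ((∃ S' ∈ fragSeq H e R c i, S' ⊆ colClass c (e i)) →
        S ∈ fragSeq H e R c i ∧ S ⊆ colClass c (e i)) := by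
    intro c
    by_cases h : ∃ S' ∈ fragSeq H e R c i, S' ⊆ colClass c (e i)
    · obtain ⟨S, hS, hS'⟩ := h
      refine ⟨S, ?_, fun _ => ⟨hS, hS'⟩⟩
      have := fragSeq_card H e R c hH i S hS
      omega
    · exact ⟨∅, by simp, fun h' => absurd h' h⟩
  choose Z hZ1 hZ2 using hch
  have hmem : ∀ c T, T ∈ bigFrag H e R c i → T ⊆ Z (recol T (e i) c) ∧ l ≤ T.card := by
    intro c T hT
    obtain ⟨hT, hTl⟩ := Finset.mem_filter.1 hT
    refine ⟨?_, not_lt.1 hTl⟩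
    obtain ⟨S, hS, hST⟩ := minFrag_sub hT
    have hmin : ∀ U ∈ fragSeq H e R c i, U \ colClass c (e i) ⊆ T → U \ colClass c (e i) = T :=
      minFrag_min hT
    have hcls : ∀ j < i, colClass (recol T (e i) c) (e j) = colClass c (e j) := by
      intro j hj
      ext a
      simp only [mem_colClass]
      unfold recol
      by_cases ha : a ∈ T
      · simp only [ha, if_true]
        have h1 := fragSeq_disj H e R c i S hS a (by rw [← hST] at ha; exact (Finset.mem_sdiff.1 ha).1) j hj
        constructor
        · intro h; exact absurd h.symm (he j hj)
        · intro h; exact absurd h h1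
      · simp [ha]
    have hseq : fragSeq H e R (recol T (e i) c) i = fragSeq H e R c i :=
      fragSeq_congr _ _ _ _ _ _ hcls
    have hclsi : colClass (recol T (e i) c) (e i) = colClass c (e i) ∪ T := by
      ext a
      simp only [mem_colClass, Finset.mem_union]
      unfold recol
      by_cases ha : a ∈ T <;> simp [ha]
    have hSsub : S ⊆ colClass c (e i) ∪ T := by
      intro a ha
      by_cases h : a ∈ colClass c (e i)
      · exact Finset.mem_union_left _ h
      · exact Finset.mem_union_right _ (hST ▸ Finset.mem_sdiff.2 ⟨ha, h⟩)
    obtain ⟨h1, h2⟩ := hZ2 (recol T (e i) c) ⟨S, by rw [hseq]; exact hS, by rw [hclsi]; exact hSsub⟩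
    rw [hseq] at h1
    rw [hclsi] at h2
    have := hmin _ h1 (by
      intro a ha
      obtain ⟨ha1, ha2⟩ := Finset.mem_sdiff.1 ha
      exact (Finset.mem_union.1 (h2 ha1)).resolve_left ha2)
    intro a ha
    rw [← this] at ha
    exact (Finset.mem_sdiff.1 ha).1
  let f : Finset α → (α → κ) → ℝ := fun T c => if T ⊆ Z c ∧ l ≤ T.card then p ^ T.card else 0
  have hf : ∀ T c, 0 ≤ f T c := by
    intro T c; simp only [f]; split_ifs <;> positivity
  calc ∑ c : α → κ, ∑ T ∈ bigFrag H e R c i, p ^ T.card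
      ≤ ∑ c : α → κ, ∑ T : Finset α, f T (recol T (e i) c) := by
        apply Finset.sum_le_sum
        intro c _
        refine (Finset.sum_le_sum (fun T hT => ?_)).trans
          (Finset.sum_le_univ_sum_of_nonneg (s := bigFrag H e R c i) (fun T => hf T _))
        simp only [f]
        rw [if_pos (hmem c T hT)]
    _ = ∑ T : Finset α, ∑ c : α → κ, f T (recol T (e i) c) := Finset.sum_comm
    _ ≤ ∑ T : Finset α, K ^ T.card * ∑ c : α → κ, f T c :=
        Finset.sum_le_sum (fun T _ => sum_recol_le T (e i) (f T) (hf T))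
    _ = ∑ c : α → κ, ∑ T : Finset α, K ^ T.card * f T c := by
        simp_rw [Finset.mul_sum]; exact Finset.sum_comm
    _ ≤ ∑ c : α → κ, (4 * K * p) := by
        apply Finset.sum_le_sum
        intro c _
        have h1 : ∑ T : Finset α, K ^ T.card * f T c ≤
            ∑ T ∈ (Z c).powerset, (K * p) ^ l := by
          rw [← Finset.sum_subset (Finset.subset_univ (Z c).powerset)]
          · apply Finset.sum_le_sum
            intro T hT
            simp only [f]
            split_ifs with h
            · rw [← mul_pow]
              apply pow_le_pow_of_le_one (by positivity) _ h.2
              nlinarith [mul_nonneg hK0 hp]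
            · rw [mul_zero]; positivity
          · intro T _ hT
            have : ¬ (T ⊆ Z c ∧ l ≤ T.card) := fun h => hT (Finset.mem_powerset.2 h.1)
            simp [f, this]
        refine h1.trans ?_
        rw [Finset.sum_const, Finset.card_powerset, nsmul_eq_mul]
        calc ((2 ^ (Z c).card : ℕ) : ℝ) * (K * p) ^ l ≤ (2 ^ (2 * l)) * (K * p) ^ l := by
              apply mul_le_mul_of_nonneg_right _ (by positivity)
              push_cast
              exact pow_le_pow_right₀ (by norm_num) (hZ1 c)
          _ = (4 * K * p) ^ l := by
              rw [pow_mul, ← mul_pow]; norm_num [mul_assoc]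
          _ ≤ (4 * K * p) ^ 1 := pow_le_pow_of_le_one (by positivity) hKp hl1
          _ = 4 * K * p := pow_one _
    _ = _ := by simp
end frag

/-- Spread lemma for two families: if neither family has a cheap cover, there are disjoint
members. -/
lemma exists_disjoint {α : Type*} [Fintype α] [DecidableEq α] (A B : Finset (Finset α)) (R : ℕ)
    (hA : ∀ S ∈ A, S.card < 2 ^ R) (hB : ∀ S ∈ B, S.card < 2 ^ R) (p : ℝ) (hp : 0 ≤ p)
    (hR : 1 ≤ R) (hpR : 32 * (R : ℝ) ^ 2 * p < 1)
    (hcA : ∀ G : Finset (Finset α), (∀ S ∈ A, ∃ T ∈ G, T ⊆ S) → 1 / 2 ≤ ∑ T ∈ G, p ^ T.card)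
    (hcB : ∀ G : Finset (Finset α), (∀ S ∈ B, ∃ T ∈ G, T ⊆ S) → 1 / 2 ≤ ∑ T ∈ G, p ^ T.card) :
    ∃ a ∈ A, ∃ b ∈ B, Disjoint a b := by
  classical
  have : NeZero R := ⟨by omega⟩
  let κ := Fin R × Bool
  have hκ : (Fintype.card κ : ℝ) = 2 * R := by simp [κ]; ring
  have hR1 : (1 : ℝ) ≤ R := by exact_mod_cast hR
  let e : Bool → ℕ → κ := fun b i => (Fin.ofNat R i, b)
  have he : ∀ b i, i < R → ∀ j < i, e b j ≠ e b i := by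
    intro b i hi j hj h
    have h := congrArg (fun z : κ => (z.1 : ℕ)) h
    simp only [e, Fin.val_ofNat] at h
    rw [Nat.mod_eq_of_lt hi, Nat.mod_eq_of_lt (hj.trans hi)] at h
    omega
  let cost : Finset (Finset α) → Bool → (α → κ) → ℝ := fun H b c =>
    ∑ i ∈ Finset.range R, ∑ T ∈ bigFrag H (e b) R c i, p ^ T.card
  have hcost : ∀ H b, (∀ S ∈ H, S.card < 2 ^ R) →
      ∑ c, cost H b c ≤ Fintype.card (α → κ) * (8 * R ^ 2 * p) := by
    intro H b hH
    simp only [cost]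
    rw [Finset.sum_comm]
    calc _ ≤ ∑ i ∈ Finset.range R, (Fintype.card (α → κ) : ℝ) * (4 * (Fintype.card κ : ℝ) * p) := by
          apply Finset.sum_le_sum
          intro i hi
          refine bigFrag_cost H (e b) R hH p hp ?_ i (Finset.mem_range.1 hi)
            (he b i (Finset.mem_range.1 hi))
          rw [hκ]
          nlinarith [mul_nonneg (sub_nonneg.2 hR1) hp, mul_nonneg (mul_nonneg (sub_nonneg.2 hR1) hp) (zero_le_one.trans hR1)]
      _ = _ := by rw [hκ, Finset.sum_const, Finset.card_range, nsmul_eq_mul]; ring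
  have hex : ∃ c, cost A true c + cost B false c < 1 / 2 := by
    by_contra hcon
    push Not at hcon
    have h1 : ∑ c : α → κ, (1 / 2 : ℝ) ≤ ∑ c, (cost A true c + cost B false c) :=
      Finset.sum_le_sum (fun c _ => hcon c)
    rw [Finset.sum_add_distrib] at h1
    have h2 := hcost A true hA
    have h3 := hcost B false hB
    rw [Finset.sum_const, nsmul_eq_mul, Finset.card_univ] at h1
    have hpos : (0 : ℝ) < Fintype.card (α → κ) := by
      have : 0 < Fintype.card (α → κ) := Fintype.card_pos
      exact_mod_cast this
    nlinarith
  obtain ⟨c, hc⟩ := hex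
  have hnn : ∀ H b, 0 ≤ cost H b c := fun H b =>
    Finset.sum_nonneg (fun i _ => Finset.sum_nonneg (fun T _ => by positivity))
  have main : ∀ H b, cost H b c < 1 / 2 →
      (∀ G : Finset (Finset α), (∀ S ∈ H, ∃ T ∈ G, T ⊆ S) → 1 / 2 ≤ ∑ T ∈ G, p ^ T.card) →
      (∀ S ∈ H, S.card < 2 ^ R) →
      ∃ S ∈ H, ∀ a ∈ S, (c a).2 = b := by
    intro H b hlt hcov hH
    by_cases hne : (fragSeq H (e b) R c R).Nonempty
    · obtain ⟨T, hT⟩ := hne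
      have hT0 : T = ∅ := by
        have := fragSeq_card H (e b) R c hH R T hT
        simpa using this
      obtain ⟨S, hS, h⟩ := fragSeq_origin H (e b) R c R T hT
      refine ⟨S, hS, fun a ha => ?_⟩
      rcases h a ha with h | ⟨j, _, h⟩
      · simp [hT0] at h
      · rw [h]
    · exfalso
      rw [Finset.not_nonempty_iff_eq_empty] at hne
      have h1 := hcov ((Finset.range R).biUnion (fun i => bigFrag H (e b) R c i)) (by
        intro S hS
        rcases fragSeq_cover H (e b) R c R S hS with ⟨T, hT, _⟩ | ⟨j, hj, T, hT, hTS⟩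
        · rw [hne] at hT; simp at hT
        · exact ⟨T, Finset.mem_biUnion.2 ⟨j, Finset.mem_range.2 hj, hT⟩, hTS⟩)
      have h2 : ∑ T ∈ (Finset.range R).biUnion (fun i => bigFrag H (e b) R c i), p ^ T.card ≤
          cost H b c := by
        simp only [cost]
        rw [Finset.sum_sigma']
        have : (Finset.range R).biUnion (fun i => bigFrag H (e b) R c i) =
          ((Finset.range R).sigma (fun i => bigFrag H (e b) R c i)).image (fun x => x.2) := by
          ext T; simp
        rw [this]
        exact Finset.sum_image_le_of_nonneg (f := fun T : Finset α => p ^ T.card)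
          (fun _ _ => by positivity)
      linarith
  obtain ⟨a, ha, h1⟩ := main A true (by linarith [hnn B false]) hcA hA
  obtain ⟨b, hb, h2⟩ := main B false (by linarith [hnn A true]) hcB hB
  refine ⟨a, ha, b, hb, Finset.disjoint_left.2 (fun x hx hx' => ?_)⟩
  have := (h1 x hx).symm.trans (h2 x hx')
  simp at this

/-- The graph of a permutation. -/
def gr {n : ℕ} (σ : Equiv.Perm (Fin n)) : Finset (Fin n × Fin n) :=
  Finset.univ.image (fun i => (i, σ i))

lemma mem_gr {n : ℕ} (σ : Equiv.Perm (Fin n)) (x : Fin n × Fin n) : x ∈ gr σ ↔ σ x.1 = x.2 := by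
  obtain ⟨a, b⟩ := x
  simp [gr]

lemma card_gr {n : ℕ} (σ : Equiv.Perm (Fin n)) : (gr σ).card = n := by
  rw [gr, Finset.card_image_of_injective _ (fun a b h => (Prod.mk.inj h).1)]
  simp

lemma gr_inj {n : ℕ} {σ π : Equiv.Perm (Fin n)} (h : gr σ = gr π) : σ = π := by
  ext i
  have : (i, σ i) ∈ gr π := by rw [← h]; simp [mem_gr]
  rw [mem_gr] at this
  simp at this
  rw [this]

lemma agreements_eq {n : ℕ} (σ π : Equiv.Perm (Fin n)) :
    agreements σ π = (gr σ ∩ gr π).card := by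
  have : gr σ ∩ gr π = (Finset.univ.filter (fun i => σ i = π i)).image (fun i => (i, σ i)) := by
    ext ⟨a, b⟩
    simp only [Finset.mem_inter, mem_gr, Finset.mem_image, Finset.mem_filter, Finset.mem_univ,
      true_and, Prod.mk.injEq]
    constructor
    · rintro ⟨h1, h2⟩; exact ⟨a, h1.trans h2.symm, rfl, h1⟩
    · rintro ⟨i, h, rfl, rfl⟩; exact ⟨rfl, h.symm⟩
  rw [this, Finset.card_image_of_injective _ (fun a b h => (Prod.mk.inj h).1)]
  rfl

/-- Members of `F` whose graph contains `X`. -/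
def ext' {n : ℕ} (F : Finset (Equiv.Perm (Fin n))) (X : Finset (Fin n × Fin n)) :
    Finset (Equiv.Perm (Fin n)) := F.filter (fun σ => X ⊆ gr σ)

lemma mem_ext' {n : ℕ} {F : Finset (Equiv.Perm (Fin n))} {X : Finset (Fin n × Fin n)}
    {σ : Equiv.Perm (Fin n)} : σ ∈ ext' F X ↔ σ ∈ F ∧ X ⊆ gr σ := by
  simp [ext']

lemma card_fix {n : ℕ} (I : Finset (Fin n)) :
    (Finset.univ.filter (fun σ : Equiv.Perm (Fin n) => ∀ i ∈ I, σ i = i)).card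
      = (n - I.card).factorial := by
  have h := Fintype.card_congr (Equiv.Perm.subtypeEquivSubtypePerm (fun i : Fin n => i ∉ I))
  rw [Fintype.card_perm, Fintype.card_subtype, Fintype.card_subtype] at h
  have h1 : (Finset.univ.filter (fun i : Fin n => i ∉ I)).card = n - I.card := by
    rw [Finset.filter_not, Finset.card_sdiff_of_subset (Finset.filter_subset _ _)]
    simp
  rw [h1] at h
  rw [h]
  congr 1
  ext σ
  simp

lemma sub_gr_eq {n : ℕ} {X : Finset (Fin n × Fin n)} {σ : Equiv.Perm (Fin n)} (h : X ⊆ gr σ) :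
    (X.image Prod.fst).card = X.card ∧ ∀ π : Equiv.Perm (Fin n),
      X ⊆ gr π ↔ ∀ i ∈ X.image Prod.fst, π i = σ i := by
  constructor
  · apply Finset.card_image_of_injOn
    intro a ha b hb hab
    have h1 := (mem_gr σ a).1 (h ha)
    have h2 := (mem_gr σ b).1 (h hb)
    exact Prod.ext hab (by rw [← h1, ← h2, hab])
  · intro π
    constructor
    · intro hp i hi
      obtain ⟨x, hx, rfl⟩ := Finset.mem_image.1 hi
      rw [(mem_gr σ x).1 (h hx), (mem_gr π x).1 (hp hx)]
    · intro hp x hx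
      rw [mem_gr, hp x.1 (Finset.mem_image_of_mem _ hx), (mem_gr σ x).1 (h hx)]

lemma card_ext'_univ {n : ℕ} {X : Finset (Fin n × Fin n)} {σ : Equiv.Perm (Fin n)}
    (h : X ⊆ gr σ) : (ext' Finset.univ X).card = (n - X.card).factorial := by
  obtain ⟨h1, h2⟩ := sub_gr_eq h
  rw [← h1, ← card_fix]
  apply Finset.card_bij' (fun π _ => σ⁻¹ * π) (fun π _ => σ * π)
  · intro π hπ
    have := (h2 π).1 (mem_ext'.1 hπ).2
    simp only [Finset.mem_filter, Finset.mem_univ, true_and]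
    intro i hi
    simp [this i hi]
  · intro π hπ
    simp only [Finset.mem_filter, Finset.mem_univ, true_and] at hπ
    refine mem_ext'.2 ⟨Finset.mem_univ _, (h2 _).2 (fun i hi => ?_)⟩
    simp [hπ i hi]
  · intro π _; simp
  · intro π _; simp

lemma card_ext'_le {n : ℕ} (F : Finset (Equiv.Perm (Fin n))) (X : Finset (Fin n × Fin n)) :
    (ext' F X).card ≤ (n - X.card).factorial := by
  by_cases h : ∃ σ, X ⊆ gr σ
  · obtain ⟨σ, h⟩ := h
    rw [← card_ext'_univ h]
    exact Finset.card_le_card (Finset.filter_subset_filter _ (Finset.subset_univ _))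
  · have : ext' F X = ∅ := by
      ext σ; simp only [mem_ext', Finset.notMem_empty, iff_false]
      exact fun h' => h ⟨σ, h'.2⟩
    simp [this]

/-- Spread family around `X`. -/
def IsSp {n : ℕ} (r : ℕ) (X : Finset (Fin n × Fin n)) (A : Finset (Equiv.Perm (Fin n))) : Prop :=
  A.Nonempty ∧ (∀ a ∈ A, X ⊆ gr a) ∧
    ∀ T, X ⊆ T → (ext' A T).card * r ^ T.card ≤ A.card * r ^ X.card

lemma decomp {n : ℕ} (r q B : ℕ)
    (hB : ∀ x, q < x → x ≤ n → r ^ x * (n - x).factorial ≤ B)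
    (F : Finset (Equiv.Perm (Fin n))) :
    ∃ 𝒮 : Finset (Finset (Fin n × Fin n)), ∃ Rm ⊆ F, Rm.card ≤ B ∧
      (∀ X ∈ 𝒮, X.card ≤ q ∧ ∃ A ⊆ F, IsSp r X A) ∧
      ∀ σ ∈ F, σ ∉ Rm → ∃ X ∈ 𝒮, X ⊆ gr σ := by
  induction F using Finset.strongInduction with
  | H F ih =>
    rcases F.eq_empty_or_nonempty with rfl | hne
    · exact ⟨∅, ∅, by simp⟩
    obtain ⟨X, hX, hmax⟩ := Finset.exists_max_image
      ((Finset.univ : Finset (Finset (Fin n × Fin n))).filter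
        (fun X => F.card ≤ (ext' F X).card * r ^ X.card)) Finset.card
      ⟨∅, by rw [Finset.mem_filter]; simp [ext']⟩
    simp only [Finset.mem_filter, Finset.mem_univ, true_and] at hX hmax
    have hFpos := Finset.card_pos.2 hne
    have hAne : (ext' F X).Nonempty := by
      rw [← Finset.card_pos]
      rcases Nat.eq_zero_or_pos (ext' F X).card with h | h
      · rw [h] at hX; omega
      · exact h
    have hAF : ext' F X ⊆ F := Finset.filter_subset _ _
    have hsp : IsSp r X (ext' F X) := by
      refine ⟨hAne, fun a ha => (mem_ext'.1 ha).2, fun T hXT => ?_⟩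
      have hTT : ext' (ext' F X) T ⊆ ext' F T := by
        intro σ hσ
        rw [mem_ext', mem_ext'] at hσ
        exact mem_ext'.2 ⟨hσ.1.1, hσ.2⟩
      by_cases hTX : T = X
      · subst hTX
        exact Nat.mul_le_mul_right _ (Finset.card_le_card (Finset.filter_subset _ _))
      · have hlt : X.card < T.card :=
          Finset.card_lt_card (hXT.ssubset_of_ne (Ne.symm hTX))
        have : ¬ F.card ≤ (ext' F T).card * r ^ T.card := fun h => by
          have := hmax T h; omega
        have h2 := Nat.mul_le_mul_right (r ^ T.card) (Finset.card_le_card hTT)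
        omega
    by_cases hq : X.card ≤ q
    · obtain ⟨𝒮, Rm, hRm, hRmB, h1, h2⟩ := ih (F \ ext' F X)
        (Finset.sdiff_ssubset hAF hAne)
      refine ⟨insert X 𝒮, Rm, hRm.trans Finset.sdiff_subset, hRmB, ?_, ?_⟩
      · intro Z hZ
        rcases Finset.mem_insert.1 hZ with rfl | hZ
        · exact ⟨hq, _, hAF, hsp⟩
        · obtain ⟨h, A, hA, hA'⟩ := h1 Z hZ
          exact ⟨h, A, hA.trans Finset.sdiff_subset, hA'⟩
      · intro σ hσ hσR
        by_cases hσX : σ ∈ ext' F X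
        · exact ⟨X, Finset.mem_insert_self _ _, (mem_ext'.1 hσX).2⟩
        · obtain ⟨Z, hZ, hZ'⟩ := h2 σ (Finset.mem_sdiff.2 ⟨hσ, hσX⟩) hσR
          exact ⟨Z, Finset.mem_insert_of_mem hZ, hZ'⟩
    · refine ⟨∅, F, subset_rfl, ?_, by simp, fun σ h1 h2 => absurd h1 h2⟩
      obtain ⟨a, ha⟩ := hAne
      have hXn : X.card ≤ n := by
        have := Finset.card_le_card (mem_ext'.1 ha).2
        rwa [card_gr] at this
      calc F.card ≤ (ext' F X).card * r ^ X.card := hX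
        _ ≤ (n - X.card).factorial * r ^ X.card := Nat.mul_le_mul_right _ (card_ext'_le _ _)
        _ ≤ B := by rw [mul_comm]; exact hB _ (by omega) hXn

/-- The link family used in the spread lemma. -/
def link {n : ℕ} (X Y : Finset (Fin n × Fin n)) (A : Finset (Equiv.Perm (Fin n))) :
    Finset (Finset (Fin n × Fin n)) :=
  (A.image (fun a => gr a \ X)).filter (fun S => Disjoint S Y)

lemma link_cover {n : ℕ} (r q : ℕ) (hr : 1 ≤ r) (hq : 2 * q ≤ r) (X Y : Finset (Fin n × Fin n))
    (hY : Y.card ≤ q) (A : Finset (Equiv.Perm (Fin n))) (hA : IsSp r X A)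
    (G : Finset (Finset (Fin n × Fin n))) (hG : ∀ S ∈ link X Y A, ∃ T ∈ G, T ⊆ S) :
    1 / 2 ≤ ∑ T ∈ G, (1 / (r : ℝ)) ^ T.card := by
  obtain ⟨hne, hX, hsp⟩ := hA
  have hr0 : (0 : ℝ) < r := by exact_mod_cast hr
  have hext : ∀ T, Disjoint X T → ((ext' A (X ∪ T)).card : ℝ) ≤ A.card * (1 / (r : ℝ)) ^ T.card := by
    intro T hT
    have h := hsp (X ∪ T) Finset.subset_union_left
    rw [Finset.card_union_of_disjoint hT, pow_add] at h
    have h' : ((ext' A (X ∪ T)).card * r ^ T.card) * r ^ X.card ≤ A.card * r ^ X.card := by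
      calc _ = (ext' A (X ∪ T)).card * (r ^ X.card * r ^ T.card) := by ring
        _ ≤ _ := h
    have h2 := Nat.le_of_mul_le_mul_right h' (by positivity)
    rw [one_div, inv_pow, ← div_eq_mul_inv, le_div_iff₀ (by positivity)]
    exact_mod_cast h2
  have hcov : A ⊆ (G.filter (fun T => Disjoint X T)).biUnion (fun T => ext' A (X ∪ T)) ∪
      (Y \ X).biUnion (fun y => ext' A (X ∪ {y})) := by
    intro a ha
    rw [Finset.mem_union]
    by_cases hd : Disjoint (gr a \ X) Y
    · left
      obtain ⟨T, hT, hTa⟩ := hG (gr a \ X)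
        (Finset.mem_filter.2 ⟨Finset.mem_image_of_mem _ ha, hd⟩)
      refine Finset.mem_biUnion.2 ⟨T, Finset.mem_filter.2 ⟨hT, ?_⟩, mem_ext'.2 ⟨ha, ?_⟩⟩
      · exact Finset.disjoint_of_subset_right hTa Finset.disjoint_sdiff
      · exact Finset.union_subset (hX a ha) (hTa.trans Finset.sdiff_subset)
    · right
      obtain ⟨y, hy1, hy2⟩ := Finset.not_disjoint_iff.1 hd
      obtain ⟨hy1, hy3⟩ := Finset.mem_sdiff.1 hy1
      refine Finset.mem_biUnion.2 ⟨y, Finset.mem_sdiff.2 ⟨hy2, hy3⟩, mem_ext'.2 ⟨ha, ?_⟩⟩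
      exact Finset.union_subset (hX a ha) (Finset.singleton_subset_iff.2 hy1)
  have hApos : (0 : ℝ) < A.card := by exact_mod_cast Finset.card_pos.2 hne
  have h1 : (A.card : ℝ) ≤ ∑ T ∈ G.filter (fun T => Disjoint X T), ((ext' A (X ∪ T)).card : ℝ) +
      ∑ y ∈ Y \ X, ((ext' A (X ∪ {y})).card : ℝ) := by
    have := (Finset.card_le_card hcov).trans ((Finset.card_union_le _ _).trans
      (Nat.add_le_add Finset.card_biUnion_le Finset.card_biUnion_le))
    exact_mod_cast this
  have h2 : ∑ T ∈ G.filter (fun T => Disjoint X T), ((ext' A (X ∪ T)).card : ℝ) ≤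
      A.card * ∑ T ∈ G, (1 / (r : ℝ)) ^ T.card := by
    rw [Finset.mul_sum]
    refine (Finset.sum_le_sum (fun T hT => hext T (Finset.mem_filter.1 hT).2)).trans ?_
    exact Finset.sum_le_sum_of_subset_of_nonneg (Finset.filter_subset _ _)
      (fun _ _ _ => by positivity)
  have h3 : ∑ y ∈ Y \ X, ((ext' A (X ∪ {y})).card : ℝ) ≤ A.card * (1 / 2) := by
    have : ∀ y ∈ Y \ X, ((ext' A (X ∪ {y})).card : ℝ) ≤ A.card * (1 / (r : ℝ)) := by
      intro y hy
      have := hext {y} (by simpa using (Finset.mem_sdiff.1 hy).2)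
      simpa using this
    refine (Finset.sum_le_sum this).trans ?_
    rw [Finset.sum_const, nsmul_eq_mul]
    have hc : ((Y \ X).card : ℝ) ≤ q := by
      exact_mod_cast (Finset.card_le_card Finset.sdiff_subset).trans hY
    have hq' : (2 : ℝ) * q ≤ r := by exact_mod_cast hq
    have : ((Y \ X).card : ℝ) * (1 / r) ≤ 1 / 2 := by
      rw [mul_one_div, div_le_iff₀ hr0]; linarith
    nlinarith
  nlinarith

lemma cross {n : ℕ} (t r q R : ℕ) (hr : 1 ≤ r) (hq : 2 * q ≤ r) (hR : 1 ≤ R) (hn : n < 2 ^ R)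
    (hRr : 32 * R ^ 2 < r) (X Y : Finset (Fin n × Fin n)) (hX : X.card ≤ q) (hY : Y.card ≤ q)
    (F A B : Finset (Equiv.Perm (Fin n))) (hF : IsTIntersecting t F) (hAF : A ⊆ F) (hBF : B ⊆ F)
    (hA : IsSp r X A) (hB : IsSp r Y B) : t ≤ (X ∩ Y).card := by
  have hr0 : (0 : ℝ) < r := by exact_mod_cast hr
  have hsz : ∀ X Y : Finset (Fin n × Fin n), ∀ A, ∀ S ∈ link X Y A, S.card < 2 ^ R := by
    intro X Y A S hS
    obtain ⟨a, -, rfl⟩ := Finset.mem_image.1 (Finset.mem_filter.1 hS).1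
    refine lt_of_le_of_lt (Finset.card_le_card Finset.sdiff_subset) ?_
    rwa [card_gr]
  obtain ⟨a', ha', b', hb', hd⟩ := exists_disjoint (link X Y A) (link Y X B) R (hsz _ _ _)
    (hsz _ _ _) (1 / (r : ℝ)) (by positivity) hR (by
      rw [mul_one_div, div_lt_one hr0]; exact_mod_cast hRr)
    (link_cover r q hr hq X Y hY A hA) (link_cover r q hr hq Y X hX B hB)
  obtain ⟨ha1, ha2⟩ := Finset.mem_filter.1 ha'
  obtain ⟨hb1, hb2⟩ := Finset.mem_filter.1 hb'
  obtain ⟨a, ha, rfl⟩ := Finset.mem_image.1 ha1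
  obtain ⟨b, hb, rfl⟩ := Finset.mem_image.1 hb1
  have h := hF a (hAF ha) b (hBF hb)
  rw [agreements_eq] at h
  refine h.trans (Finset.card_le_card ?_)
  intro e he
  obtain ⟨h1, h2⟩ := Finset.mem_inter.1 he
  rw [Finset.disjoint_left] at ha2 hb2 hd
  simp only [Finset.mem_sdiff, Finset.mem_inter] at *
  by_cases hx : e ∈ X
  · refine ⟨hx, ?_⟩
    by_contra hy
    exact hb2 ⟨h2, hy⟩ hx
  · exfalso
    by_cases hy : e ∈ Y
    · exact ha2 ⟨h1, hx⟩ hy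
    · exact hd ⟨h1, hx⟩ ⟨h2, hy⟩

lemma exists_model {n : ℕ} (I : Finset (Fin n)) (ρ : Equiv.Perm (Fin n)) :
    ∃ ρ' : Equiv.Perm (Fin n), (∀ i ∈ I, ρ' i = i) ∧ ∀ i, i ∉ I → ρ i ∉ I → ρ' i = ρ i := by
  classical
  obtain ⟨g, hg⟩ := Finset.exists_equiv_extend_of_card_eq (α := {i : Fin n // i ∉ I}) (t := Iᶜ)
    (by rw [Fintype.card_subtype, Finset.filter_not,
          Finset.card_sdiff_of_subset (Finset.filter_subset _ _)]
        simp [Finset.card_compl])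
    (s := Finset.univ.filter (fun i : {i : Fin n // i ∉ I} => ρ i ∉ I)) (f := fun i => ρ i)
    (by intro x hx
        obtain ⟨i, hi, rfl⟩ := Finset.mem_image.1 hx
        simpa using hi)
    (by intro a _ b _ hab
        exact Subtype.ext (ρ.injective hab))
  let τ : Equiv.Perm {i : Fin n // i ∉ I} :=
    g.trans (Equiv.subtypeEquivRight (fun i => by simp))
  refine ⟨Equiv.Perm.ofSubtype τ, fun i hi => ?_, fun i hi hρ => ?_⟩
  · exact Equiv.Perm.ofSubtype_apply_of_not_mem τ (by simpa using hi)
  · rw [Equiv.Perm.ofSubtype_apply_of_mem τ hi]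
    exact hg ⟨i, hi⟩ (by simpa using hρ)

lemma card_exact_fix {n : ℕ} (I : Finset (Fin n)) :
    (Finset.univ.filter (fun f : Equiv.Perm (Fin n) => ∀ a, a ∈ I ↔ f a = a)).card
      = numDerangements (n - I.card) := by
  classical
  have h := Fintype.card_congr (derangements.subtypeEquiv (fun i : Fin n => i ∉ I))
  rw [card_derangements_eq_numDerangements, Fintype.card_subtype, Fintype.card_subtype] at h
  have h1 : (Finset.univ.filter (fun i : Fin n => i ∉ I)).card = n - I.card := by
    rw [Finset.filter_not, Finset.card_sdiff_of_subset (Finset.filter_subset _ _)]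
    simp
  rw [h1] at h
  rw [h]
  congr 1
  ext σ
  simp [Function.IsFixedPt]

lemma avoid_bound {n : ℕ} (Y : Finset (Fin n × Fin n)) (σ₀ σ : Equiv.Perm (Fin n))
    (hY : Y ⊆ gr σ₀) :
    ((ext' Finset.univ Y).filter (fun π => ∃ i, i ∉ Y.image Prod.fst ∧ π i = σ i)).card +
      numDerangements (n - Y.card) ≤ (n - Y.card).factorial := by
  classical
  obtain ⟨hc, hiff⟩ := sub_gr_eq hY
  set I := Y.image Prod.fst with hI
  obtain ⟨ρ, hρ1, hρ2⟩ := exists_model I (σ₀⁻¹ * σ)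
  have key : ∀ π, Y ⊆ gr π → ∀ i, i ∉ I → π i = σ i → σ₀ (ρ i) = σ i := by
    intro π hπ i hi h
    have h1 : (σ₀⁻¹ * σ) i ∉ I := by
      intro hmem
      have h2 := (hiff π).1 hπ _ hmem
      simp only [Equiv.Perm.coe_mul, Function.comp_apply] at h2
      have h5 : σ₀ (σ₀⁻¹ (σ i)) = σ i := by simp
      rw [h5, ← h] at h2
      have h3 := π.injective h2
      simp only [Equiv.Perm.coe_mul, Function.comp_apply] at hmem
      rw [← h, h3] at hmem
      exact hi hmem
    rw [hρ2 i hi h1]; simp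
  rw [← card_ext'_univ hY]
  rw [← Finset.card_filter_add_card_filter_not (s := ext' Finset.univ Y)
    (fun π => ∃ i, i ∉ I ∧ π i = σ i)]
  apply Nat.add_le_add_left
  rw [← hc, ← card_exact_fix]
  refine Finset.card_le_card_of_injOn (fun f => σ₀ * ρ * f) ?_ ?_
  · intro f hf
    simp only [Finset.coe_filter, Finset.mem_univ, true_and, Set.mem_ofPred_eq] at hf ⊢
    have hsub : Y ⊆ gr (σ₀ * ρ * f) := by
      rw [hiff]
      intro i hi
      simp [(hf i).1 hi, hρ1 i hi]
    refine ⟨mem_ext'.2 ⟨Finset.mem_univ _, hsub⟩, ?_⟩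
    rintro ⟨i, hi, h⟩
    have h1 := key _ hsub i hi h
    rw [← h] at h1
    simp only [Equiv.Perm.coe_mul, Function.comp_apply] at h1
    exact hi ((hf i).2 (ρ.injective (σ₀.injective h1)).symm)
  · intro f _ g _ h
    exact mul_left_cancel h

lemma fact_pow (N j r : ℕ) (hj : j ≤ N) (hr : 2 * r ^ 2 ≤ N) (hr1 : 1 ≤ r) :
    r ^ j * (N - j).factorial ≤ N.factorial := by
  by_cases h : 2 * j ≤ N
  · have h1 := Nat.factorial_mul_pow_le_factorial (m := N - j) (n := j)
    rw [Nat.sub_add_cancel hj] at h1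
    refine le_trans ?_ h1
    rw [mul_comm]
    apply Nat.mul_le_mul_left
    apply Nat.pow_le_pow_left
    have h2 : r ≤ r ^ 2 := by nlinarith
    omega
  · have h1 := Nat.factorial_mul_pow_le_factorial (m := N / 2) (n := N - N / 2)
    rw [Nat.add_sub_cancel' (Nat.div_le_self _ _)] at h1
    refine le_trans ?_ h1
    rw [mul_comm]
    apply Nat.mul_le_mul
    · exact Nat.factorial_le (by omega)
    · calc r ^ j ≤ r ^ (2 * (N - N / 2)) := Nat.pow_le_pow_right hr1 (by omega)
        _ = (r ^ 2) ^ (N - N / 2) := by rw [pow_mul]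
        _ ≤ _ := by apply Nat.pow_le_pow_left; omega

lemma nontrivial_bound {n : ℕ} (t r R : ℕ) (ht : 1 ≤ t) (hr : 100 ≤ r) (hq : 4 * t ≤ r)
    (hR : 1 ≤ R)
    (hn : n < 2 ^ R) (hRr : 32 * R ^ 2 < r) (hnr : 2 * r ^ 2 + 2 * t + 1 ≤ n)
    (hnt : 2 ^ (2 * t + 1) * (2 * t) + t ≤ n)
    (hD : (n - t).factorial ≤ 3 * numDerangements (n - t))
    (F : Finset (Equiv.Perm (Fin n))) (hF : IsTIntersecting t F) (hT : ¬ IsTrivial t F) :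
    4 * F.card ≤ 3 * (n - t).factorial := by
  classical
  set q := 2 * t with hqd
  set B := r ^ (q + 1) * (n - (q + 1)).factorial with hBd
  have hB : ∀ x, q < x → x ≤ n → r ^ x * (n - x).factorial ≤ B := by
    intro x hx hxn
    have h := fact_pow (n - (q + 1)) (x - (q + 1)) r (by omega) (by omega) (by omega)
    have e1 : n - (q + 1) - (x - (q + 1)) = n - x := by omega
    rw [e1] at h
    calc r ^ x * (n - x).factorial
        = r ^ (q + 1) * (r ^ (x - (q + 1)) * (n - x).factorial) := by
          rw [← mul_assoc, ← pow_add]; congr 2; omega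
      _ ≤ B := Nat.mul_le_mul_left _ h
  have hBs : 100 * B ≤ (n - t).factorial := by
    have h1 := Nat.factorial_mul_pow_le_factorial (m := n - (q + 1)) (n := t + 1)
    have e1 : n - (q + 1) + (t + 1) = n - t := by omega
    rw [e1] at h1
    refine le_trans ?_ h1
    calc 100 * B ≤ r * B := Nat.mul_le_mul_right _ hr
      _ = (n - (q + 1)).factorial * (r ^ 2) ^ (t + 1) := by
          rw [hBd, hqd, ← pow_mul]; ring
      _ ≤ _ := by
          apply Nat.mul_le_mul_left
          apply Nat.pow_le_pow_left
          omega
  obtain ⟨𝒮, Rm, hRmF, hRmB, h𝒮, hcov⟩ := decomp r q B hB F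
  have hcross : ∀ X ∈ 𝒮, ∀ Y ∈ 𝒮, t ≤ (X ∩ Y).card := by
    intro X hX Y hY
    obtain ⟨hXq, A, hAF, hA⟩ := h𝒮 X hX
    obtain ⟨hYq, A', hAF', hA'⟩ := h𝒮 Y hY
    exact cross t r q R (by omega) (by omega) hR hn hRr X Y hXq hYq F A A' hF hAF hAF' hA hA'
  by_cases hcase : ∃ Y : Finset (Fin n × Fin n), Y.card = t ∧ ∀ X ∈ 𝒮, Y ⊆ X
  · obtain ⟨Y, hYt, hYX⟩ := hcase
    have hFY : F ⊆ Rm ∪ ext' F Y := by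
      intro σ hσ
      by_cases h : σ ∈ Rm
      · exact Finset.mem_union_left _ h
      · obtain ⟨X, hX, hXσ⟩ := hcov σ hσ h
        exact Finset.mem_union_right _ (mem_ext'.2 ⟨hσ, (hYX X hX).trans hXσ⟩)
    have hF1 := (Finset.card_le_card hFY).trans (Finset.card_union_le _ _)
    by_cases hemp : ext' F Y = ∅
    · rw [hemp] at hF1; simp at hF1; omega
    obtain ⟨σ₀, hσ₀⟩ := Finset.nonempty_iff_ne_empty.2 hemp
    obtain ⟨hσ₀F, hσ₀Y⟩ := mem_ext'.1 hσ₀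
    obtain ⟨hc, hiff⟩ := sub_gr_eq hσ₀Y
    have hex : ∃ σ ∈ F, ¬ Y ⊆ gr σ := by
      by_contra hcon
      push Not at hcon
      exact hT ⟨Y.image Prod.fst, hc.trans hYt, σ₀, fun σ hσ => (hiff σ).1 (hcon σ hσ)⟩
    obtain ⟨σ, hσF, hσY⟩ := hex
    have hsub : ext' F Y ⊆ (ext' Finset.univ Y).filter
        (fun π => ∃ i, i ∉ Y.image Prod.fst ∧ π i = σ i) := by
      intro π hπ
      obtain ⟨hπF, hπY⟩ := mem_ext'.1 hπ
      refine Finset.mem_filter.2 ⟨mem_ext'.2 ⟨Finset.mem_univ _, hπY⟩, ?_⟩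
      by_contra hcon
      push Not at hcon
      have h1 := hF π hπF σ hσF
      rw [agreements_eq] at h1
      have h2 : gr π ∩ gr σ ⊆ Y := by
        intro x hx
        obtain ⟨hx1, hx2⟩ := Finset.mem_inter.1 hx
        rw [mem_gr] at hx1 hx2
        by_contra hxY
        apply hcon x.1 _ (hx1.trans hx2.symm)
        intro hmem
        obtain ⟨y, hy, hyx⟩ := Finset.mem_image.1 hmem
        have h3 := (mem_gr π y).1 (hπY hy)
        have : y = x := Prod.ext hyx (by rw [← h3, ← hx1, hyx])
        exact hxY (this ▸ hy)
      have h3 := Finset.eq_of_subset_of_card_le h2 (by omega)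
      exact hσY (h3 ▸ Finset.inter_subset_right)
    have h1 := Finset.card_le_card hsub
    have h2 := avoid_bound Y σ₀ σ hσ₀Y
    rw [hYt] at h2
    omega
  · push Not at hcase
    rcases 𝒮.eq_empty_or_nonempty with hemp | ⟨X₁, hX₁⟩
    · have : F ⊆ Rm := by
        intro σ hσ
        by_contra h
        obtain ⟨X, hX, _⟩ := hcov σ hσ h
        simp [hemp] at hX
      have := Finset.card_le_card this
      omega
    have hch : ∀ Y : Finset (Fin n × Fin n), ∃ X, Y.card = t → X ∈ 𝒮 ∧ ¬ Y ⊆ X := by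
      intro Y
      by_cases h : Y.card = t
      · obtain ⟨X, hX, hYX⟩ := hcase Y h
        exact ⟨X, fun _ => ⟨hX, hYX⟩⟩
      · exact ⟨∅, fun h' => absurd h' h⟩
    choose Z hZ using hch
    have hFY : F ⊆ Rm ∪ (X₁.powersetCard t).biUnion
        (fun Y => (Z Y \ Y).biUnion (fun y => ext' F (insert y Y))) := by
      intro σ hσ
      by_cases h : σ ∈ Rm
      · exact Finset.mem_union_left _ h
      · obtain ⟨X, hX, hXσ⟩ := hcov σ hσ h
        apply Finset.mem_union_right
        obtain ⟨Y, hY, hYt⟩ := Finset.exists_subset_card_eq (hcross X₁ hX₁ X hX)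
        obtain ⟨hZS, hZY⟩ := hZ Y hYt
        have h1 := hcross X hX (Z Y) hZS
        have hex : ∃ y ∈ X ∩ Z Y, y ∉ Y := by
          by_contra hcon
          push Not at hcon
          have h3 := Finset.eq_of_subset_of_card_le (s := X ∩ Z Y) (t := Y) hcon (by omega)
          exact hZY (h3.symm.subset.trans Finset.inter_subset_right)
        obtain ⟨y, hy, hyY⟩ := hex
        obtain ⟨hy1, hy2⟩ := Finset.mem_inter.1 hy
        refine Finset.mem_biUnion.2 ⟨Y, Finset.mem_powersetCard.2
          ⟨hY.trans Finset.inter_subset_left, hYt⟩, Finset.mem_biUnion.2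
          ⟨y, Finset.mem_sdiff.2 ⟨hy2, hyY⟩, mem_ext'.2 ⟨hσ, ?_⟩⟩⟩
        exact Finset.insert_subset (hXσ hy1) ((hY.trans Finset.inter_subset_right).trans hXσ)
    have hF1 := (Finset.card_le_card hFY).trans (Finset.card_union_le _ _)
    have h2 : ((X₁.powersetCard t).biUnion
        (fun Y => (Z Y \ Y).biUnion (fun y => ext' F (insert y Y)))).card ≤
        2 ^ q * (q * (n - (t + 1)).factorial) := by
      refine (Finset.card_biUnion_le_card_mul _ _ (q * (n - (t + 1)).factorial) ?_).trans ?_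
      · intro Y hY
        obtain ⟨_, hYt⟩ := Finset.mem_powersetCard.1 hY
        refine (Finset.card_biUnion_le_card_mul _ _ ((n - (t + 1)).factorial) ?_).trans ?_
        · intro y hy
          refine (card_ext'_le _ _).trans ?_
          rw [Finset.card_insert_of_notMem (Finset.mem_sdiff.1 hy).2, hYt]
        · apply Nat.mul_le_mul_right
          exact (Finset.card_le_card Finset.sdiff_subset).trans (h𝒮 _ (hZ Y hYt).1).1
      · apply Nat.mul_le_mul_right
        rw [Finset.card_powersetCard]
        exact (Nat.choose_le_two_pow _ _).trans
          (Nat.pow_le_pow_right (by norm_num) (h𝒮 X₁ hX₁).1)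
    have h3 : 2 * (2 ^ q * (q * (n - (t + 1)).factorial)) ≤ (n - t).factorial := by
      have e1 : n - t = (n - (t + 1)) + 1 := by omega
      rw [e1, Nat.factorial_succ]
      calc 2 * (2 ^ q * (q * (n - (t + 1)).factorial))
          = (2 ^ (q + 1) * q) * (n - (t + 1)).factorial := by ring
        _ ≤ _ := by apply Nat.mul_le_mul_right; omega
    omega

/-- Permutations agreeing with every member of `G` in at least `t` places. -/
def perp {n : ℕ} (t : ℕ) (G : Finset (Equiv.Perm (Fin n))) : Finset (Equiv.Perm (Fin n)) :=
  Finset.univ.filter (fun σ => ∀ g ∈ G, t ≤ agreements σ g)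

lemma mem_perp {n t : ℕ} {G : Finset (Equiv.Perm (Fin n))} {σ : Equiv.Perm (Fin n)} :
    σ ∈ perp t G ↔ ∀ g ∈ G, t ≤ agreements σ g := by
  simp [perp]

lemma agreements_comm {n : ℕ} (σ π : Equiv.Perm (Fin n)) : agreements σ π = agreements π σ := by
  rw [agreements_eq, agreements_eq, Finset.inter_comm]

lemma agreements_self {n : ℕ} (σ : Equiv.Perm (Fin n)) : agreements σ σ = n := by
  simp [agreements]

lemma exists_gen {n t : ℕ} (htn : t ≤ n) (F : Finset (Equiv.Perm (Fin n)))
    (hF : IsTIntersecting t F) :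
    ∃ G : Finset (Equiv.Perm (Fin n)), G.card ≤ t * n.centralBinom ∧ F ⊆ perp t G ∧
      IsTIntersecting t (perp t G) := by
  classical
  obtain ⟨H, hFH, hH⟩ := Set.Finite.exists_le_maximal
    (Set.toFinite {H : Finset (Equiv.Perm (Fin n)) | IsTIntersecting t H}) (a := F) hF
  have hHint : IsTIntersecting t H := hH.1
  have hHp : perp t H = H := by
    apply Finset.Subset.antisymm
    · intro σ hσ
      rw [mem_perp] at hσ
      have h1 : IsTIntersecting t (insert σ H) := by
        intro a ha b hb
        rcases Finset.mem_insert.1 ha with rfl | ha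
        · rcases Finset.mem_insert.1 hb with rfl | hb
          · rw [agreements_self]; exact htn
          · exact hσ b hb
        · rcases Finset.mem_insert.1 hb with hb | hb
          · rw [agreements_comm, hb]; exact hσ a ha
          · exact hHint a ha b hb
      exact hH.2 h1 (Finset.subset_insert σ H) (Finset.mem_insert_self σ H)
    · intro σ hσ
      exact mem_perp.2 (fun g hg => hHint σ hσ g hg)
  obtain ⟨G, hG, hGmin⟩ := Finset.exists_min_image
    (Finset.univ.filter (fun G : Finset (Equiv.Perm (Fin n)) => perp t G = H)) Finset.card
    ⟨H, by simpa using hHp⟩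
  have hGH : perp t G = H := by simpa using hG
  refine ⟨G, ?_, by rw [hGH]; exact hFH, by rw [hGH]; exact hHint⟩
  have hf : ∀ g : Equiv.Perm (Fin n), ∃ f : Equiv.Perm (Fin n), g ∈ G →
      agreements f g < t ∧ ∀ g' ∈ G, g' ≠ g → t ≤ agreements f g' := by
    intro g
    by_cases hg : g ∈ G
    · have h1 : perp t (G.erase g) ≠ H := by
        intro h
        have h2 := hGmin (G.erase g) (by simpa using h)
        have h3 := Finset.card_erase_lt_of_mem hg
        omega
      have h2 : ¬ perp t (G.erase g) ⊆ H := by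
        intro h
        apply h1
        apply Finset.Subset.antisymm h
        rw [← hGH]
        intro σ hσ
        rw [mem_perp] at hσ ⊢
        exact fun g' hg' => hσ g' (Finset.mem_of_mem_erase hg')
      obtain ⟨f, hf1, hf2⟩ := Finset.not_subset.1 h2
      rw [mem_perp] at hf1
      refine ⟨f, fun _ => ⟨?_, fun g' hg' hne => hf1 g' (Finset.mem_erase.2 ⟨hne, hg'⟩)⟩⟩
      by_contra hcon
      apply hf2
      rw [← hGH, mem_perp]
      intro g' hg'
      by_cases hne : g' = g
      · rw [hne]; omega
      · exact hf1 g' (Finset.mem_erase.2 ⟨hne, hg'⟩)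
    · exact ⟨1, fun h => absurd h hg⟩
  choose f hf using hf
  refine bollobas_t G (fun g => gr (f g)) (fun g => gr g) n t htn (fun _ _ => card_gr _)
    (fun _ _ => card_gr _) ?_ ?_
  · intro i hi
    have := (hf i hi).1
    rwa [agreements_eq] at this
  · intro i hi j hj hij
    have := (hf i hi).2 j hj hij.symm
    rwa [agreements_eq] at this

lemma card_small_sets {α : Type*} [Fintype α] [DecidableEq α] (g : ℕ) :
    (Finset.univ.filter (fun G : Finset α => G.card ≤ g)).card ≤ (Fintype.card α + 1) ^ g := by
  classical
  induction g with
  | zero =>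
    have : (Finset.univ.filter (fun G : Finset α => G.card ≤ 0)) ⊆ {∅} := by
      intro G hG
      simpa using hG
    simpa using Finset.card_le_card this
  | succ g ih =>
    set T := Finset.univ.filter (fun G : Finset α => G.card ≤ g) with hT
    have hsub : (Finset.univ.filter (fun G : Finset α => G.card ≤ g + 1)) ⊆
        T ∪ ((Finset.univ : Finset α) ×ˢ T).image (fun p => insert p.1 p.2) := by
      intro G hG
      have hG' : G.card ≤ g + 1 := by simpa using hG
      rcases G.eq_empty_or_nonempty with rfl | ⟨a, ha⟩
      · apply Finset.mem_union_left; simp [hT]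
      · apply Finset.mem_union_right
        refine Finset.mem_image.2 ⟨(a, G.erase a), ?_, Finset.insert_erase ha⟩
        simp only [hT, Finset.mem_product, Finset.mem_univ, true_and, Finset.mem_filter]
        rw [Finset.card_erase_of_mem ha]; omega
    calc _ ≤ _ := Finset.card_le_card hsub
      _ ≤ T.card + (((Finset.univ : Finset α) ×ˢ T).image (fun p => insert p.1 p.2)).card :=
        Finset.card_union_le _ _
      _ ≤ T.card + Fintype.card α * T.card := by
        apply Nat.add_le_add_left
        refine Finset.card_image_le.trans ?_
        rw [Finset.card_product, Finset.card_univ]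
      _ = (Fintype.card α + 1) * T.card := by ring
      _ ≤ (Fintype.card α + 1) * (Fintype.card α + 1) ^ g := Nat.mul_le_mul_left _ ih
      _ = _ := by ring

lemma count_nontrivial {n t m M : ℕ} (htn : t ≤ n)
    (hM : ∀ F : Finset (Equiv.Perm (Fin n)), IsTIntersecting t F → ¬ IsTrivial t F → F.card ≤ M) :
    Nat.card {F : Finset (Equiv.Perm (Fin n)) //
          IsTIntersecting t F ∧ ¬ IsTrivial t F ∧ F.card = m} ≤
      (n.factorial + 1) ^ (t * n.centralBinom) * M.choose m := by
  classical
  rw [Nat.card_eq_fintype_card, Fintype.card_subtype]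
  set g := t * n.centralBinom with hg
  set 𝒢 := (Finset.univ.filter (fun G : Finset (Equiv.Perm (Fin n)) => G.card ≤ g)) with h𝒢
  have hsub : (Finset.univ.filter (fun F : Finset (Equiv.Perm (Fin n)) =>
      IsTIntersecting t F ∧ ¬ IsTrivial t F ∧ F.card = m)) ⊆
      (𝒢.filter (fun G => (perp t G).card ≤ M)).biUnion
        (fun G => Finset.powersetCard m (perp t G)) := by
    intro F hF
    obtain ⟨h1, h2, h3⟩ := (Finset.mem_filter.1 hF).2
    obtain ⟨G, hGc, hFG, hGi⟩ := exists_gen htn F h1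
    refine Finset.mem_biUnion.2 ⟨G, ?_, Finset.mem_powersetCard.2 ⟨hFG, h3⟩⟩
    refine Finset.mem_filter.2 ⟨by simpa [h𝒢] using hGc, hM _ hGi ?_⟩
    rintro ⟨I, hI, x, hx⟩
    exact h2 ⟨I, hI, x, fun σ hσ => hx σ (hFG hσ)⟩
  refine (Finset.card_le_card hsub).trans ?_
  refine (Finset.card_biUnion_le_card_mul _ _ (M.choose m) ?_).trans ?_
  · intro G hG
    rw [Finset.card_powersetCard]
    exact Nat.choose_le_choose m (Finset.mem_filter.1 hG).2
  · apply Nat.mul_le_mul_right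
    refine (Finset.card_filter_le _ _).trans ?_
    have := card_small_sets (α := Equiv.Perm (Fin n)) g
    rwa [Fintype.card_perm, Fintype.card_fin] at this

lemma count_all {n t m : ℕ} (htn : t ≤ n) :
    (n - t).factorial.choose m ≤ Nat.card {F : Finset (Equiv.Perm (Fin n)) //
          IsTIntersecting t F ∧ F.card = m} := by
  classical
  rw [Nat.card_eq_fintype_card, Fintype.card_subtype]
  obtain ⟨I, -, hI⟩ := Finset.exists_subset_card_eq (s := (Finset.univ : Finset (Fin n)))
    (n := t) (by simpa using htn)
  rw [← hI, ← card_fix I, ← Finset.card_powersetCard]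
  apply Finset.card_le_card
  intro F hF
  obtain ⟨h1, h2⟩ := Finset.mem_powersetCard.1 hF
  refine Finset.mem_filter.2 ⟨Finset.mem_univ _, ?_, h2⟩
  intro σ hσ π hπ
  have a := (Finset.mem_filter.1 (h1 hσ)).2
  have b := (Finset.mem_filter.1 (h1 hπ)).2
  apply Finset.card_le_card
  intro i hi
  simp [a i hi, b i hi]

lemma choose_ratio {M N : ℕ} (h : 4 * M ≤ 3 * N) (m : ℕ) :
    4 ^ m * M.choose m ≤ 3 ^ m * N.choose m := by
  have key : 4 ^ m * M.descFactorial m ≤ 3 ^ m * N.descFactorial m := by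
    induction m with
    | zero => simp
    | succ m ih =>
      rw [Nat.descFactorial_succ, Nat.descFactorial_succ]
      calc 4 ^ (m + 1) * ((M - m) * M.descFactorial m)
          = (4 * (M - m)) * (4 ^ m * M.descFactorial m) := by ring
        _ ≤ (3 * (N - m)) * (3 ^ m * N.descFactorial m) := Nat.mul_le_mul (by omega) ih
        _ = _ := by ring
  rw [Nat.descFactorial_eq_factorial_mul_choose, Nat.descFactorial_eq_factorial_mul_choose] at key
  apply Nat.le_of_mul_le_mul_left _ (Nat.factorial_pos m)
  calc _ = 4 ^ m * (m.factorial * M.choose m) := by ring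
    _ ≤ _ := key
    _ = _ := by ring

lemma poly_exp (k : ℕ) : 4 * (32 * (k + 40) ^ 2 + 1) ^ 2 ≤ 2 ^ (k + 39) := by
  induction k with
  | zero => norm_num
  | succ k ih =>
    have h1 : 5 * (32 * (k + 1 + 40) ^ 2 + 1) ≤ 7 * (32 * (k + 40) ^ 2 + 1) := by
      ring_nf
      omega
    have h2 := Nat.pow_le_pow_left h1 2
    rw [mul_pow, mul_pow] at h2
    have h3 : 2 ^ (k + 1 + 39) = 2 * 2 ^ (k + 39) := by ring
    rw [h3]
    omega

lemma params (t : ℕ) : ∃ n₀ : ℕ, ∀ n : ℕ, n₀ ≤ n → ∃ r R : ℕ, 100 ≤ r ∧ 4 * t ≤ r ∧ 1 ≤ R ∧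
    n < 2 ^ R ∧ 32 * R ^ 2 < r ∧ 2 * r ^ 2 + 2 * t + 1 ≤ n := by
  refine ⟨2 ^ 39 + 64 * t ^ 2 + 4 * t + 100, fun n hn => ?_⟩
  have hn39 : 2 ^ 39 ≤ n := by omega
  have hn0 : n ≠ 0 := by omega
  have hlog : 39 ≤ Nat.log 2 n := Nat.le_log_of_pow_le (by norm_num) hn39
  obtain ⟨k, hk⟩ := Nat.exists_eq_add_of_le hlog
  have hp := poly_exp k
  have hpn : 2 ^ (k + 39) ≤ n := by
    rw [add_comm, ← hk]; exact Nat.pow_log_le_self 2 hn0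
  have hr1 : 32 * (k + 40) ^ 2 + 1 ≤ Nat.sqrt (n / 4) := by
    rw [Nat.le_sqrt']; omega
  have hr2 : 4 * t ≤ Nat.sqrt (n / 4) := by
    rw [Nat.le_sqrt', mul_pow]; omega
  have hr3 := Nat.sqrt_le' (n / 4)
  refine ⟨Nat.sqrt (n / 4), k + 40, by nlinarith, hr2, by omega, ?_, by omega, by omega⟩
  have := Nat.lt_pow_succ_log_self (b := 2) (by norm_num) n
  rw [hk] at this
  have e : k + 40 = (39 + k).succ := by omega
  rw [e]; exact this

lemma derange_ev : ∃ n₀ : ℕ, ∀ n : ℕ, n₀ ≤ n → n.factorial ≤ 3 * numDerangements n := by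
  have h := numDerangements_tendsto_inv_e
  have h1 : (1 / 3 : ℝ) < Real.exp (-1) := by
    rw [Real.exp_neg, one_div]
    exact inv_strictAnti₀ (Real.exp_pos 1) (by have := Real.exp_one_lt_d9; linarith)
  obtain ⟨n₀, hn₀⟩ := Filter.eventually_atTop.1 (h.eventually (lt_mem_nhds h1))
  refine ⟨n₀, fun n hn => ?_⟩
  have h2 := hn₀ n hn
  have hpos : (0 : ℝ) < n.factorial := by exact_mod_cast Nat.factorial_pos n
  rw [lt_div_iff₀ hpos] at h2
  have h3 : (n.factorial : ℝ) ≤ 3 * numDerangements n := by linarith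
  exact_mod_cast h3

lemma gen_small {n t : ℕ} (htn : t ≤ n) (h : 25 * t ^ 2 * 16 ^ t ≤ 2 * n + 1) :
    5 * (t * n.centralBinom) ≤ 2 ^ (2 * n - 2 * t + 2) := by
  obtain ⟨d, rfl⟩ := Nat.exists_eq_add_of_le htn
  have e : 2 * (t + d) - 2 * t + 2 = 2 * d + 2 := by omega
  rw [e]
  have hb := centralBinom_sq_bound (t + d)
  set c := (t + d).centralBinom
  have hpos : 0 < 2 * (t + d) + 1 := by omega
  refine le_of_pow_le_pow_left₀ (n := 2) (by norm_num) (Nat.zero_le _) ?_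
  apply Nat.le_of_mul_le_mul_right _ hpos
  calc (5 * (t * c)) ^ 2 * (2 * (t + d) + 1) = 25 * t ^ 2 * (c ^ 2 * (2 * (t + d) + 1)) := by ring
    _ ≤ 25 * t ^ 2 * 16 ^ (t + d) := Nat.mul_le_mul_left _ hb
    _ = (25 * t ^ 2 * 16 ^ t) * 16 ^ d := by rw [pow_add]; ring
    _ ≤ (2 * (t + d) + 1) * 16 ^ d := Nat.mul_le_mul_right _ h
    _ ≤ (2 * (t + d) + 1) * (16 * 16 ^ d) := Nat.mul_le_mul_left _ (by omega)
    _ = (2 ^ (2 * d + 2)) ^ 2 * (2 * (t + d) + 1) := by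
      have : (2 ^ (2 * d + 2)) ^ 2 = 16 * 16 ^ d := by
        rw [← pow_mul, show (2 * d + 2) * 2 = 4 * (d + 1) by ring, pow_mul]
        norm_num [pow_succ]; ring
      rw [this]; ring

lemma final_num {n t m : ℕ} (hn : 2 ≤ n) (htn : t ≤ n)
    (h : 25 * t ^ 2 * 16 ^ t ≤ 2 * n + 1)
    (hm : (n : ℝ) * (2 : ℝ) ^ (2 * n - 2 * t + 2) * Real.logb 2 n ≤ (m : ℝ)) :
    ((n.factorial + 1 : ℕ) : ℝ) ^ (t * n.centralBinom) * 3 ^ m ≤ (9 / 10) ^ n * 4 ^ m := by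
  have hg := gen_small htn h
  set g := t * n.centralBinom
  set L := Real.logb 2 n with hL
  have hn' : (2 : ℝ) ≤ n := by exact_mod_cast hn
  have hL1 : 1 ≤ L := by
    rw [hL, Real.le_logb_iff_rpow_le (by norm_num) (by linarith)]
    simpa using hn'
  have hnL : (2 : ℝ) ^ L = n := Real.rpow_logb (by norm_num) (by norm_num) (by linarith)
  have hgR : 5 * (g : ℝ) ≤ 2 ^ (2 * n - 2 * t + 2) := by exact_mod_cast hg
  have hnL0 : 0 ≤ (n : ℝ) * L := by positivity
  have h5 : 5 * (L * n * g) ≤ m := by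
    have := mul_le_mul_of_nonneg_right hgR hnL0
    nlinarith
  have hnm : n ≤ m := by
    have h1 : (1 : ℝ) ≤ 2 ^ (2 * n - 2 * t + 2) := one_le_pow₀ (by norm_num)
    have h2 : (1 : ℝ) ≤ 2 ^ (2 * n - 2 * t + 2) * L := one_le_mul_of_one_le_of_one_le h1 hL1
    have h3 : (n : ℝ) ≤ m := by
      refine le_trans ?_ hm
      rw [mul_assoc]
      exact le_mul_of_one_le_right (by linarith) h2
    exact_mod_cast h3
  have hfac : n.factorial + 1 ≤ n ^ n := by
    obtain ⟨k, hk⟩ : ∃ k, n = k + 1 := ⟨n - 1, by omega⟩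
    have h1 := Nat.factorial_le_pow k
    have h2 : k ^ k < (k + 1) ^ k := Nat.pow_lt_pow_left (by omega) (by omega)
    rw [hk, Nat.factorial_succ, pow_succ]
    nlinarith
  have hfacR : ((n.factorial + 1 : ℕ) : ℝ) ≤ (n : ℝ) ^ n := by exact_mod_cast hfac
  have hA : ((n.factorial + 1 : ℕ) : ℝ) ^ g ≤ (6 / 5 : ℝ) ^ m := by
    have hA5 : (((n.factorial + 1 : ℕ) : ℝ) ^ g) ^ 5 ≤ ((6 / 5 : ℝ) ^ m) ^ 5 := by
      calc (((n.factorial + 1 : ℕ) : ℝ) ^ g) ^ 5 ≤ (((n : ℝ) ^ n) ^ g) ^ 5 := by gcongr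
        _ = (2 : ℝ) ^ (5 * (L * n * g)) := by
          rw [← hnL, ← Real.rpow_mul_natCast (by norm_num), ← Real.rpow_mul_natCast (by norm_num),
            ← Real.rpow_mul_natCast (by norm_num)]
          rw [hnL]
          congr 1; push_cast; ring
        _ ≤ (2 : ℝ) ^ (m : ℝ) := Real.rpow_le_rpow_of_exponent_le (by norm_num) h5
        _ = 2 ^ m := Real.rpow_natCast _ _
        _ ≤ ((6 / 5 : ℝ) ^ 5) ^ m := by gcongr; norm_num
        _ = _ := by rw [← pow_mul, ← pow_mul, mul_comm]
    exact le_of_pow_le_pow_left₀ (by norm_num) (by positivity) hA5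
  calc _ ≤ (6 / 5 : ℝ) ^ m * 3 ^ m := by gcongr
    _ = (9 / 10) ^ m * 4 ^ m := by rw [← mul_pow, ← mul_pow]; norm_num
    _ ≤ _ := by
      gcongr ?_ * _
      exact pow_le_pow_of_le_one (by norm_num) (by norm_num) hnm

theorem typical_structure_of_t_intersecting_families_of_size_m
    (t : ℕ) (ht : 1 ≤ t) (ε : ℝ) (hε : 0 < ε) :
    ∃ n₀ : ℕ, ∀ n : ℕ, n₀ ≤ n → ∀ m : ℕ,
      (n : ℝ) * (2 : ℝ) ^ (2 * n - 2 * t + 2) * Real.logb 2 n ≤ (m : ℝ) →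
      m ≤ (n - t).factorial →
      (Nat.card {F : Finset (Equiv.Perm (Fin n)) //
          IsTIntersecting t F ∧ ¬ IsTrivial t F ∧ F.card = m} : ℝ) ≤
        ε * (Nat.card {F : Finset (Equiv.Perm (Fin n)) //
          IsTIntersecting t F ∧ F.card = m} : ℝ) := by
  obtain ⟨n₁, h₁⟩ := params t
  obtain ⟨n₂, h₂⟩ := derange_ev
  obtain ⟨n₃, h₃⟩ := exists_pow_lt_of_lt_one hε (show (9 / 10 : ℝ) < 1 by norm_num)
  refine ⟨n₁ + n₂ + n₃ + t + 2 + 25 * t ^ 2 * 16 ^ t + (2 ^ (2 * t + 1) * (2 * t) + t),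
    fun n hn m hm _ => ?_⟩
  obtain ⟨r, R, hr, hq, hR, hnR, hRr, hnr⟩ := h₁ n (by omega)
  have htn : t ≤ n := by omega
  set N := (n - t).factorial with hN
  have hMb : ∀ F : Finset (Equiv.Perm (Fin n)), IsTIntersecting t F → ¬ IsTrivial t F →
      F.card ≤ 3 * N / 4 := by
    intro F hF hT
    have := nontrivial_bound t r R ht hr hq hR hnR hRr hnr (by omega) (h₂ _ (by omega)) F hF hT
    omega
  have c1 := count_nontrivial (m := m) htn hMb
  have c2 := count_all (m := m) htn
  have c3 := choose_ratio (M := 3 * N / 4) (N := N) (by omega) m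
  have c4 := final_num (by omega) htn (by omega) hm
  rw [← hN] at c2
  set a := Nat.card {F : Finset (Equiv.Perm (Fin n)) //
          IsTIntersecting t F ∧ ¬ IsTrivial t F ∧ F.card = m}
  set b := Nat.card {F : Finset (Equiv.Perm (Fin n)) // IsTIntersecting t F ∧ F.card = m}
  set K := (n.factorial + 1) ^ (t * n.centralBinom) with hK
  have hpow : (9 / 10 : ℝ) ^ n ≤ ε :=
    (pow_le_pow_of_le_one (by norm_num) (by norm_num) (by omega)).trans h₃.le
  have d1 : 4 ^ m * a ≤ K * 3 ^ m * b := by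
    calc 4 ^ m * a ≤ 4 ^ m * (K * (3 * N / 4).choose m) := Nat.mul_le_mul_left _ c1
      _ = K * (4 ^ m * (3 * N / 4).choose m) := by ring
      _ ≤ K * (3 ^ m * N.choose m) := Nat.mul_le_mul_left _ c3
      _ = K * 3 ^ m * N.choose m := by ring
      _ ≤ _ := Nat.mul_le_mul_left _ c2
  have d2 : (4 : ℝ) ^ m * a ≤ K * 3 ^ m * b := by exact_mod_cast d1
  have hKR : (K : ℝ) = ((n.factorial + 1 : ℕ) : ℝ) ^ (t * n.centralBinom) := by
    rw [hK, Nat.cast_pow]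
  rw [← hKR] at c4
  have h4 : (0 : ℝ) < 4 ^ m := by positivity
  refine le_of_mul_le_mul_left ?_ h4
  calc (4 : ℝ) ^ m * a ≤ K * 3 ^ m * b := d2
    _ ≤ (9 / 10) ^ n * 4 ^ m * b := by gcongr
    _ ≤ ε * 4 ^ m * b := by gcongr
    _ = _ := by ring
end
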